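/- arXiv:2504.05027 — 3 statements merged into one kernel-verified Lean document; each statement's English description precedes it below -/
import Mathlib

section
/- Let P_λ be the law of the Poisson point measure on X with intensity λμ_X, and let 0 < λ₁ < λ₂. Assume that under P_{λ₁} the expected number of connected components of V ∩ B(0,1) is finite. If P_{λ₂}[N_V = 1] = 1, then P_{λ₁}[N_V = 1] = 1. -/
open MeasureTheory Metric Set Bornology Function
open scoped ENNReal NNReal unitInterval

noncomputable section

namespace BooleanModel

/-- The space of simple, locally finite point configurations on a metric space `X`
(realizations of simple counting measures on `X`). -/
def Config (X : Type*) [MetricSpace X] : Type _ :=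
  {s : Set X // ∀ K : Set X, IsBounded K → (s ∩ K).Finite}

namespace Config

variable {X : Type*} [MetricSpace X]

/-- The σ-algebra on `Config X` generated by the evaluation (counting) maps `ω ↦ ω(B)`. -/
instance instMeasurableSpace [MeasurableSpace X] : MeasurableSpace (Config X) :=
  MeasurableSpace.generateFrom
    {A | ∃ (B : Set X) (n : ℕ∞), MeasurableSet B ∧ A = {s : Config X | (s.1 ∩ B).encard = n}}

/-- The number of points of the configuration `s` lying in `B`. -/
def count (B : Set X) (s : Config X) : ℕ∞ := (s.1 ∩ B).encard

/-- Adding a point to a configuration (`ω + δ_y`). -/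
def insertPt (y : X) (s : Config X) : Config X :=
  ⟨insert y s.1, by
    intro K hK
    refine ((s.2 K hK).insert y).subset ?_
    rintro z ⟨hz1, hz2⟩
    rcases Set.mem_insert_iff.1 hz1 with rfl | h
    · exact Set.mem_insert _ _
    · exact Set.mem_insert_of_mem _ ⟨h, hz2⟩⟩

/-- The restriction `ω|_{B^c}` of a configuration to the complement of `B`. -/
def restrict (B : Set X) (s : Config X) : Config X :=
  ⟨s.1 ∩ Bᶜ, fun K hK => (s.2 K hK).subset fun z hz => ⟨hz.1.1, hz.2⟩⟩

/-- Push-forward of a configuration under an isometry of `X`. -/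
def mapIso (γ : X ≃ᵢ X) (s : Config X) : Config X :=
  ⟨⇑γ '' s.1, by
    intro K hK
    have h1 : ⇑γ ⁻¹' K = ⇑γ.symm '' K := by
      ext z
      constructor
      · intro hz; exact ⟨γ z, hz, γ.symm_apply_apply z⟩
      · rintro ⟨w, hw, rfl⟩; simpa using hw
    have h2 : ⇑γ '' s.1 ∩ K = ⇑γ '' (s.1 ∩ ⇑γ ⁻¹' K) := (Set.image_inter_preimage _ _ _).symm
    rw [h2]
    refine (s.2 _ ?_).image _
    rw [h1]
    exact γ.symm.isometry.lipschitz.isBounded_image hK⟩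

end Config

section BasicDefs

variable {X : Type*} [MetricSpace X]

/-- The occupied set of the Boolean model with unit radii driven by `s`. -/
def occupied (s : Config X) : Set X := ⋃ x ∈ s.1, closedBall x 1

/-- The vacant set of the Boolean model with unit radii driven by `s`. -/
def vacant (s : Config X) : Set X := (occupied s)ᶜ

/-- The collection of connected components of a set `S ⊆ X`. -/
def comps (S : Set X) : Set (Set X) := {C | ∃ x ∈ S, C = connectedComponentIn S x}

/-- The collection of unbounded connected components of `S`. -/
def ucomps (S : Set X) : Set (Set X) := {C | C ∈ comps S ∧ ¬IsBounded C}

/-- The number of connected components of `S`. -/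
def numComps (S : Set X) : ℕ∞ := (comps S).encard

/-- `N_S`: the number of unbounded connected components of `S`. -/
def numUcomps (S : Set X) : ℕ∞ := (ucomps S).encard

/-- A metric space is point-symmetric (the metric counterpart of being a Riemannian
symmetric space) if every point `x` admits a geodesic-reversing isometry fixing `x`,
i.e. an isometric point reflection around `x`. -/
def PointSymmetric (X : Type*) [MetricSpace X] : Prop :=
  ∀ x : X, ∃ invol : X ≃ᵢ X, invol x = x ∧ ∀ y : X, dist y (invol y) = 2 * dist x y

/-- The local connected component `C_S(y,r)`. -/
def localComp (S : Set X) (y : X) (r : ℝ) : Set X :=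
  connectedComponentIn (S ∩ closedBall y r) y

end BasicDefs

section MeasureDefs

variable {X : Type*} [MetricSpace X] [MeasurableSpace X]

/-- A measure on `Config X` is isometry invariant if it is preserved by the push-forward
action of every isometry of `X`. -/
def IsoInvariant (P : Measure (Config X)) : Prop :=
  ∀ γ : X ≃ᵢ X, Measure.map (Config.mapIso γ) P = P

/-- Every isometry-invariant event has probability `0` or `1`. -/
def ErgodicIso (P : Measure (Config X)) : Prop :=
  ∀ E : Set (Config X), MeasurableSet E →
    (∀ γ : X ≃ᵢ X, Config.mapIso γ ⁻¹' E = E) → P E = 0 ∨ P E = 1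

/-- `P` is insertion-tolerant: for every Borel `B` with `0 < μ B < ∞`, the law of
`ω + δ_Y` with `Y` uniform in `B` independent of `ω` is absolutely continuous w.r.t. `P`. -/
def InsertionTolerant (μ : Measure X) (P : Measure (Config X)) : Prop :=
  ∀ B : Set X, MeasurableSet B → 0 < μ B → μ B < ⊤ →
    Measure.map (fun p : Config X × X => Config.insertPt p.2 p.1)
      (P.prod ((μ B)⁻¹ • μ.restrict B)) ≪ P

/-- `P` is deletion-tolerant: for every Borel `B` with `0 < μ B < ∞`, the law of
`ω|_{B^c}` is absolutely continuous w.r.t. `P`. -/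
def DeletionTolerant (μ : Measure X) (P : Measure (Config X)) : Prop :=
  ∀ B : Set X, MeasurableSet B → 0 < μ B → μ B < ⊤ →
    Measure.map (Config.restrict B) P ≪ P

/-- `P` is the law of the Poisson point measure on `X` with intensity `ν`:
counts in disjoint Borel sets are independent with the correct Poisson distributions. -/
def IsPoisson (ν : Measure X) (P : Measure (Config X)) : Prop :=
  IsProbabilityMeasure P ∧
  (∀ B : Set X, MeasurableSet B → ν B < ⊤ → ∀ k : ℕ,
      P {s : Config X | Config.count B s = k} =
        ENNReal.ofReal (Real.exp (-(ν B).toReal) * (ν B).toReal ^ k / (Nat.factorial k))) ∧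
  (∀ B : Set X, MeasurableSet B → ν B = ⊤ → P {s : Config X | (s.1 ∩ B).Infinite} = 1) ∧
  (∀ (n : ℕ) (B : Fin n → Set X) (k : Fin n → ℕ),
      (∀ i, MeasurableSet (B i)) → (Pairwise fun i j => Disjoint (B i) (B j)) →
      P {s : Config X | ∀ i, Config.count (B i) s = k i} =
        ∏ i, P {s : Config X | Config.count (B i) s = k i})

end MeasureDefs

section PathDefs

variable {X : Type*} [MetricSpace X]

/-- The intrinsic distance between `x` and `y` within the set `S`: the infimum of the lengths
of continuous paths from `x` to `y` whose range is contained in `S`. -/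
def pathDistIn (S : Set X) (x y : X) : ℝ≥0∞ :=
  ⨅ (γ : Path x y) (_ : Set.range ⇑γ ⊆ S), eVariationOn ⇑γ Set.univ

/-- Intrinsic distance within `S` between two subsets `A` and `B`. -/
def setDistIn (S A B : Set X) : ℝ≥0∞ :=
  ⨅ (a : X) (_ : a ∈ A) (b : X) (_ : b ∈ B), pathDistIn S a b

/-- `y` is an `r`-trifurcation (marked by a point of `Y`) for the set `S`. -/
def IsTrifurcation (S : Set X) (Y : Set X) (r : ℝ) (y : X) : Prop :=
  y ∈ Y ∧ closedBall y 1 ⊆ S ∧ (∀ y' ∈ Y, y' ≠ y → 2 * r < dist y y') ∧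
    3 ≤ numUcomps (connectedComponentIn S y \ localComp S y r)

end PathDefs

end BooleanModel
namespace BooleanModel

/-! ### Part A: geometry of point-symmetric spaces -/

section Geometry

variable {X : Type*} [MetricSpace X]

/-- `τ` is a point reflection around `a`. -/
def PSym (a : X) (τ : X ≃ᵢ X) : Prop := τ a = a ∧ ∀ y : X, dist y (τ y) = 2 * dist a y

lemma PSym.inv {a : X} {τ : X ≃ᵢ X} (h : PSym a τ) : PSym a τ⁻¹ := by
  have h1 : τ⁻¹ a = a := by
    have : τ⁻¹ (τ a) = a := τ.symm_apply_apply a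
    rwa [h.1] at this
  refine ⟨h1, fun y => ?_⟩
  have e : τ (τ⁻¹ y) = y := τ.apply_symm_apply y
  have h2 := h.2 (τ⁻¹ y)
  rw [e] at h2
  rw [dist_comm, h2]
  have : dist (τ a) (τ (τ⁻¹ y)) = dist a (τ⁻¹ y) := τ.isometry.dist_eq _ _
  rw [h.1, e] at this
  rw [this]

lemma PSym.conj {a : X} {τ : X ≃ᵢ X} (h : PSym a τ) (g : X ≃ᵢ X) : PSym (g a) (g * τ * g⁻¹) := by
  have e : ∀ y, g⁻¹ (g y) = y := g.symm_apply_apply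
  have e' : ∀ y, g (g⁻¹ y) = y := g.apply_symm_apply
  refine ⟨?_, fun y => ?_⟩
  · simp only [IsometryEquiv.mul_apply, e, h.1]
  · have := h.2 (g⁻¹ y)
    rw [← g.isometry.dist_eq, ← g.isometry.dist_eq a, e'] at this
    simpa only [IsometryEquiv.mul_apply] using this

lemma iter_dist (g : X ≃ᵢ X) (w : X) (n : ℕ) : dist w ((g^n) w) ≤ n * dist w (g w) := by
  induction n with
  | zero => simp
  | succ n ih =>
    have h1 : (g^(n+1)) w = g ((g^n) w) := by rw [pow_succ']; rfl
    have h2 : dist (g w) (g ((g^n) w)) = dist w ((g^n) w) := g.isometry.dist_eq _ _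
    have := dist_triangle w (g w) (g ((g^n) w))
    rw [h1]; push_cast; linarith

/-- The product of two reflections moves each point by at least twice the distance of centres. -/
lemma sym_dist {a b : X} {α β : X ≃ᵢ X} (hα : PSym a α) (hβ : PSym b β) (z : X) :
    2 * dist a b ≤ dist (α z) (β z) := by
  have hα' := hα.inv
  set g : X ≃ᵢ X := β * α⁻¹ with hg
  have key : ∀ n : ℕ, dist a ((g^n) a) = 2 * n * dist a b ∧
      dist (α⁻¹ ((g^n) a)) b = (2 * n + 1) * dist a b := by
    intro n
    induction n with
    | zero => simp [hα'.1]
    | succ n ih =>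
      obtain ⟨i1, i2⟩ := ih
      have h1 : (g^(n+1)) a = β (α⁻¹ ((g^n) a)) := by rw [pow_succ']; rfl
      set x := (g^n) a
      set y := α⁻¹ x
      have e1 : dist (β y) b = dist y b := by
        conv_lhs => rw [← hβ.1]
        exact β.isometry.dist_eq _ _
      have e2 : dist y a = dist x a := by
        conv_lhs => rw [← hα'.1]
        exact (α⁻¹).isometry.dist_eq _ _
      have e3 := hβ.2 y
      have u1 : dist a (β y) ≤ 2 * (n+1) * dist a b := by
        have := dist_triangle a b (β y)
        rw [dist_comm b, e1, i2] at this
        linarith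
      have l1 : 2 * (n+1) * dist a b ≤ dist a (β y) := by
        have := dist_triangle y a (β y)
        rw [e2, e3, dist_comm x, i1, dist_comm b, i2] at this
        linarith
      have E1 : dist a (β y) = 2 * (n+1) * dist a b := le_antisymm u1 l1
      have e4 : dist (α⁻¹ (β y)) a = dist (β y) a := by
        conv_lhs => rw [← hα'.1]
        exact (α⁻¹).isometry.dist_eq _ _
      have e5 := hα'.2 (β y)
      have u2 : dist (α⁻¹ (β y)) b ≤ (2 * (n+1) + 1) * dist a b := by
        have := dist_triangle (α⁻¹ (β y)) a b
        rw [e4, dist_comm (β y), E1] at this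
        linarith
      have l2 : (2 * (n+1) + 1) * dist a b ≤ dist (α⁻¹ (β y)) b := by
        have := dist_triangle (β y) b (α⁻¹ (β y))
        rw [e5, E1, e1, i2, dist_comm b] at this
        linarith
      rw [h1]; push_cast
      exact ⟨E1, le_antisymm u2 l2⟩
  have hz : g (α z) = β z := by
    change β (α⁻¹ (α z)) = β z
    congr 1; exact α.symm_apply_apply z
  rw [← hz]
  set w := α z
  by_contra hlt
  push Not at hlt
  obtain ⟨n, hn⟩ := exists_nat_gt (2 * dist a w / (2 * dist a b - dist w (g w)))
  rw [div_lt_iff₀ (by linarith)] at hn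
  have h1 := (key n).1
  have h2 := iter_dist g w n
  have h3 : dist ((g^n) a) ((g^n) w) = dist a w := (g^n).isometry.dist_eq _ _
  have h4 := dist_triangle a w ((g^n) a)
  have h5 := dist_triangle w ((g^n) w) ((g^n) a)
  rw [dist_comm ((g^n) w), h3] at h5
  nlinarith

/-- `s` is an `ε`-separated finite subset of the closed ball. -/
def Packed (x : X) (r ε : ℝ) (s : Finset X) : Prop :=
  (∀ y ∈ s, dist y x ≤ r) ∧ ∀ y ∈ s, ∀ z ∈ s, y ≠ z → ε ≤ dist y z

lemma packed_bdd [ProperSpace X] (x : X) (r ε : ℝ) (hε : 0 < ε) :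
    BddAbove {n | ∃ s : Finset X, Packed x r ε s ∧ s.card = n} := by
  have hc : IsCompact (closedBall x r) := isCompact_closedBall x r
  obtain ⟨t, ht, hfin, hcov⟩ := hc.finite_cover_balls (half_pos hε)
  refine ⟨hfin.toFinset.card, ?_⟩
  rintro n ⟨s, hs, rfl⟩
  have hx : ∀ y ∈ s, ∃ c ∈ t, dist y c < ε / 2 := by
    intro y hy
    have := hcov (mem_closedBall.2 (hs.1 y hy))
    simpa using this
  choose! f hf hfd using hx
  refine Finset.card_le_card_of_injOn f (fun y hy => by simpa using hf y hy) ?_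
  intro y hy z hz hyz
  by_contra hne
  have h1 := hs.2 y hy z hz hne
  have h2 := hfd y hy
  have h3 := hfd z hz
  have h4 := dist_triangle y (f y) z
  rw [hyz, dist_comm (f z)] at h4
  rw [hyz] at h2
  linarith

/-- Packing number. -/
def pk (x : X) (r ε : ℝ) : ℕ := sSup {n | ∃ s : Finset X, Packed x r ε s ∧ s.card = n}

lemma pk_spec [ProperSpace X] (x : X) (r ε : ℝ) (hε : 0 < ε) :
    ∃ s : Finset X, Packed x r ε s ∧ s.card = pk x r ε :=
  Nat.sSup_mem (s := {n | ∃ s : Finset X, Packed x r ε s ∧ s.card = n})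
    ⟨0, ∅, by simp [Packed], rfl⟩ (packed_bdd x r ε hε)

lemma le_pk [ProperSpace X] {x : X} {r ε : ℝ} (hε : 0 < ε) {s : Finset X} (hs : Packed x r ε s) :
    s.card ≤ pk x r ε := le_csSup (packed_bdd x r ε hε) ⟨s, hs, rfl⟩

lemma packed_double (hsym : PointSymmetric X) (x : X) (r ε : ℝ) (hε : 0 < ε)
    {s : Finset X} (hs : Packed x r ε s) :
    ∃ s' : Finset X, Packed x (2 * r) (2 * ε) s' ∧ s'.card = s.card ∧
      ∀ e ∈ s', ∃ y τ, PSym y τ ∧ τ x = e := by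
  classical
  choose τ hτ using hsym
  have hs1 : ∀ y z, 2 * dist y z ≤ dist (τ y x) (τ z x) := fun y z => sym_dist (hτ y) (hτ z) x
  refine ⟨s.image (fun y => τ y x), ⟨?_, ?_⟩, ?_, ?_⟩
  · intro e he
    obtain ⟨y, hy, rfl⟩ := Finset.mem_image.1 he
    have := hs.1 y hy
    rw [dist_comm, (hτ y).2 x]; linarith
  · intro e he e' he' hne
    obtain ⟨y, hy, rfl⟩ := Finset.mem_image.1 he
    obtain ⟨z, hz, rfl⟩ := Finset.mem_image.1 he'
    have := hs.2 y hy z hz (by rintro rfl; exact hne rfl)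
    have := hs1 y z
    linarith
  · refine Finset.card_image_of_injOn ?_
    intro y hy z hz hyz
    by_contra hne
    have h1 := hs.2 y hy z hz hne
    have h2 := hs1 y z
    simp only at hyz
    rw [hyz, dist_self] at h2
    linarith
  · intro e he
    obtain ⟨y, hy, rfl⟩ := Finset.mem_image.1 he
    exact ⟨y, τ y, hτ y, rfl⟩

/-- At small scales, reflected images of `x` are relatively dense near `x`. -/
lemma exists_sym_near [ProperSpace X] (hsym : PointSymmetric X) (x : X) (ε : ℝ) (hε : 0 < ε) :
    ∃ k0 : ℕ, ∀ k ≥ k0, ∀ w, dist w x ≤ (1/2)^k →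
      ∃ y τ, PSym y τ ∧ dist (τ x) w < ε * (1/2)^k := by
  classical
  set a : ℕ → ℕ := fun k => pk x ((1/2)^k) (ε * (1/2)^k) with ha
  have hpos : ∀ k : ℕ, 0 < ε * (1/2)^k := fun k => by positivity
  have h2 : ∀ k : ℕ, 2 * (1/2 : ℝ)^(k+1) = (1/2)^k := fun k => by rw [pow_succ]; ring
  have h3 : ∀ k : ℕ, 2 * (ε * (1/2 : ℝ)^(k+1)) = ε * (1/2)^k := fun k => by rw [pow_succ]; ring
  have hdbl : ∀ k, ∃ s' : Finset X, Packed x ((1/2)^k) (ε * (1/2)^k) s' ∧ s'.card = a (k+1) ∧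
      ∀ e ∈ s', ∃ y τ, PSym y τ ∧ τ x = e := by
    intro k
    obtain ⟨s, hs, hc⟩ := pk_spec x ((1/2)^(k+1)) (ε * (1/2)^(k+1)) (hpos _)
    obtain ⟨s', h', hc', he⟩ := packed_double hsym x _ _ (hpos _) hs
    rw [h2, h3] at h'
    exact ⟨s', h', hc'.trans hc, he⟩
  have hanti : Antitone a := by
    refine antitone_nat_of_succ_le fun k => ?_
    obtain ⟨s', h', hc', -⟩ := hdbl k
    rw [← hc']
    exact le_pk (hpos _) h'
  obtain ⟨k0, hk0⟩ : ∃ k0, ∀ k, a k0 ≤ a k := by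
    obtain ⟨k0, h⟩ := Nat.find_spec (⟨_, 0, rfl⟩ : ∃ n, ∃ k, a k = n)
    refine ⟨k0, fun k => ?_⟩
    rw [h]
    exact Nat.find_min' _ ⟨k, rfl⟩
  refine ⟨k0, fun k hk w hw => ?_⟩
  obtain ⟨s', h', hc', he⟩ := hdbl k
  by_contra hno
  push Not at hno
  have hfar : ∀ e ∈ s', ε * (1/2)^k ≤ dist e w := by
    intro e hes
    obtain ⟨y, τ, hy, rfl⟩ := he e hes
    exact hno y τ hy
  have hw' : w ∉ s' := fun hmem => by
    have := hfar w hmem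
    rw [dist_self] at this
    linarith [hpos k]
  have hins : Packed x ((1/2)^k) (ε * (1/2)^k) (insert w s') := by
    refine ⟨?_, ?_⟩
    · intro y hy
      rcases Finset.mem_insert.1 hy with rfl | hy
      · exact hw
      · exact h'.1 y hy
    · intro y hy z hz hne
      rcases Finset.mem_insert.1 hy with hy | hy <;> rcases Finset.mem_insert.1 hz with hz | hz
      · exact absurd (hy.trans hz.symm) hne
      · rw [hy, dist_comm]; exact hfar z hz
      · rw [hz]; exact hfar y hy
      · exact h'.2 y hy z hz hne
  have h5 := le_pk (hpos _) hins
  rw [Finset.card_insert_of_notMem hw', hc'] at h5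
  have h6 := hk0 (k+1)
  have h7 : a k ≤ a k0 := hanti hk
  change a (k+1) + 1 ≤ a k at h5
  omega

/-- The group generated by point reflections. -/
def symGroup (X : Type*) [MetricSpace X] : Subgroup (X ≃ᵢ X) :=
  Subgroup.closure {τ | ∃ y, PSym y τ}

lemma symGroup_dense [ProperSpace X] [PreconnectedSpace X] (hsym : PointSymmetric X)
    (x y : X) (ε : ℝ) (hε : 0 < ε) : ∃ s ∈ symGroup X, dist (s x) y < ε := by
  set A : Set X := {z | ∃ s ∈ symGroup X, s x = z} with hA
  have hAne : A.Nonempty := ⟨x, 1, one_mem _, rfl⟩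
  suffices h0 : infDist y A = 0 by
    have : infDist y A < ε := by rw [h0]; exact hε
    obtain ⟨z, ⟨s, hs, rfl⟩, hz⟩ := (infDist_lt_iff hAne).1 this
    exact ⟨s, hs, by rwa [dist_comm]⟩
  by_contra hne
  have hpos : 0 < infDist y A := lt_of_le_of_ne infDist_nonneg (Ne.symm hne)
  have hinv : ∀ s ∈ symGroup X, ∀ z, infDist (s z) A ≤ infDist z A := by
    intro s hs z
    refine le_infDist hAne |>.2 ?_
    rintro _ ⟨s', hs', rfl⟩
    have : infDist (s z) A ≤ dist (s z) (s (s' x)) :=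
      infDist_le_dist_of_mem ⟨s * s', mul_mem hs hs', rfl⟩
    rwa [s.isometry.dist_eq] at this
  obtain ⟨k0, hk0⟩ := exists_sym_near hsym x (1/2) (by norm_num)
  obtain ⟨k, hk, hky⟩ : ∃ k ≥ k0, 1/2 * (1/2 : ℝ)^k ≤ infDist y A := by
    obtain ⟨n, hn⟩ := exists_pow_lt_of_lt_one hpos (by norm_num : (1/2:ℝ) < 1)
    refine ⟨max n k0, le_max_right _ _, ?_⟩
    have : (1/2:ℝ)^(max n k0) ≤ (1/2)^n :=
      pow_le_pow_of_le_one (by norm_num) (by norm_num) (le_max_left _ _)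
    have : (0:ℝ) < (1/2)^(max n k0) := by positivity
    linarith
  have hcont : Continuous (fun z => infDist z A) := continuous_infDist_pt A
  have hx0 : infDist x A = 0 := infDist_zero_of_mem ⟨1, one_mem _, rfl⟩
  obtain ⟨z, hz⟩ : ∃ z, infDist z A = 1/2 * (1/2 : ℝ)^k := by
    have := intermediate_value_univ x y hcont
    exact this ⟨by rw [hx0]; positivity, hky⟩
  have hlt : infDist z A < (1/2:ℝ)^k := by
    have : (0:ℝ) < (1/2)^k := by positivity
    rw [hz]; linarith
  obtain ⟨_, ⟨s, hs, rfl⟩, hzs⟩ := (infDist_lt_iff hAne).1 hlt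
  have e : s (s⁻¹ z) = z := s.apply_symm_apply z
  have hd : dist (s⁻¹ z) x ≤ (1/2:ℝ)^k := by
    rw [← s.isometry.dist_eq, e]; exact hzs.le
  obtain ⟨c, τ, hτ, hlt2⟩ := hk0 k hk _ hd
  have h1 : infDist (s⁻¹ z) A ≤ dist (s⁻¹ z) (τ x) :=
    infDist_le_dist_of_mem ⟨τ, Subgroup.subset_closure ⟨c, hτ⟩, rfl⟩
  have h2 := hinv s hs (s⁻¹ z)
  rw [e, hz] at h2
  rw [dist_comm] at h1
  linarith

/-- Approximate midpoints at small scales. -/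
lemma exists_approx_mid [ProperSpace X] [PreconnectedSpace X] [Nonempty X]
    (hsym : PointSymmetric X) :
    ∃ t0 > 0, ∀ x w : X, dist x w ≤ t0 →
      ∃ y, dist x y ≤ 3/4 * dist x w ∧ dist y w ≤ 3/4 * dist x w := by
  obtain ⟨x0⟩ := ‹Nonempty X›
  obtain ⟨k0, hk0⟩ := exists_sym_near hsym x0 (1/32) (by norm_num)
  refine ⟨1/2 * (1/2)^k0, by positivity, fun x w hxw => ?_⟩
  rcases eq_or_ne x w with rfl | hne
  · exact ⟨x, by simp, by simp⟩
  have ht : 0 < dist x w := dist_pos.2 hne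
  set t := dist x w with htdef
  obtain ⟨s, hs, hsx⟩ := symGroup_dense hsym x0 x (t/32) (by positivity)
  -- choose the scale
  have h4 : ∃ k ≥ k0, 2 * t ≤ (1/2 : ℝ)^k ∧ (1/2:ℝ)^k ≤ 4 * t := by
    have hex : ∃ n, (1/2 : ℝ)^n < 2 * t := exists_pow_lt_of_lt_one (by positivity) (by norm_num)
    classical
    set n := Nat.find hex
    have hn : (1/2 : ℝ)^n < 2 * t := Nat.find_spec hex
    have hnk : k0 < n := by
      by_contra hle
      push Not at hle
      have : (1/2:ℝ)^k0 ≤ (1/2)^n := pow_le_pow_of_le_one (by norm_num) (by norm_num) hle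
      linarith
    have hm := Nat.find_min hex (Nat.sub_lt (Nat.lt_of_le_of_lt (Nat.zero_le _) hnk) one_pos)
    refine ⟨n - 1, by omega, not_lt.1 hm, ?_⟩
    have : (1/2:ℝ)^n = (1/2)^(n-1) * (1/2) := by rw [← pow_succ]; congr 1; omega
    linarith
  obtain ⟨k, hk, hk1, hk2⟩ := h4
  have e : ∀ z, s (s⁻¹ z) = z := s.apply_symm_apply
  have hd : dist (s⁻¹ w) x0 ≤ t + t/32 := by
    rw [← s.isometry.dist_eq, e]
    have := dist_triangle w x (s x0)
    rw [dist_comm w x, dist_comm x (s x0)] at this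
    linarith
  obtain ⟨c, τ, hτ, hlt⟩ := hk0 k hk (s⁻¹ w) (by linarith)
  have h1 := hτ.2 x0
  have h2 : dist c (τ x0) = dist c x0 := by
    conv_lhs => rw [← hτ.1]
    exact τ.isometry.dist_eq _ _
  have h3 : dist x0 (τ x0) ≤ t + t/32 + t/8 := by
    have := dist_triangle x0 (s⁻¹ w) (τ x0)
    rw [dist_comm x0 (s⁻¹ w), dist_comm (s⁻¹ w) (τ x0)] at this
    linarith
  refine ⟨s c, ?_, ?_⟩
  · have := dist_triangle x (s x0) (s c)
    rw [s.isometry.dist_eq, dist_comm x (s x0), dist_comm x0] at this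
    linarith
  · have := dist_triangle (s c) (s (τ x0)) w
    rw [s.isometry.dist_eq, h2] at this
    have h5 : dist (s (τ x0)) w = dist (τ x0) (s⁻¹ w) := by
      conv_lhs => rw [← e w]
      exact s.isometry.dist_eq _ _
    rw [h5] at this
    linarith

lemma locConn [ProperSpace X] [PreconnectedSpace X] [Nonempty X]
    (hsym : PointSymmetric X) : LocallyConnectedSpace X := by
  obtain ⟨t0, ht0, hmid⟩ := exists_approx_mid hsym
  have key : ∀ x w : X, ∀ t, 0 < t → t ≤ t0 → dist x w ≤ t →
      w ∈ connectedComponentIn (closedBall x (4*t)) x := by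
    intro x w t ht htt0 hxw
    by_contra hcon
    have hxK : x ∈ closedBall x (4*t) := mem_closedBall_self (by positivity)
    have hwK : w ∈ closedBall x (4*t) := by rw [mem_closedBall, dist_comm]; linarith
    have : CompactSpace (closedBall x (4*t)) :=
      isCompact_iff_compactSpace.1 (isCompact_closedBall x (4*t))
    rw [connectedComponentIn_eq_image hxK] at hcon
    have hcon2 : (⟨w, hwK⟩ : closedBall x (4*t)) ∉ connectedComponent ⟨x, hxK⟩ :=
      fun hm => hcon ⟨_, hm, rfl⟩
    rw [connectedComponent_eq_iInter_isClopen] at hcon2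
    simp only [mem_iInter, not_forall] at hcon2
    obtain ⟨⟨Z, hZ, hxZ⟩, hwZ⟩ := hcon2
    simp only at hwZ
    -- bisection
    have bis : ∀ n : ℕ, ∃ p q : closedBall x (4*t), p ∈ Z ∧ q ∉ Z ∧
        dist p.1 q.1 ≤ (3/4)^n * t ∧ dist x p.1 + 4 * ((3/4)^n * t) ≤ 4 * t := by
      intro n
      induction n with
      | zero => exact ⟨⟨x, hxK⟩, ⟨w, hwK⟩, hxZ, hwZ, by simpa using hxw, by simp⟩
      | succ n ih =>
        obtain ⟨p, q, hp, hq, hpq, hxp⟩ := ih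
        have hD : 0 < (3/4:ℝ)^n * t := by positivity
        have hDt : (3/4:ℝ)^n * t ≤ t := by
          have : (3/4:ℝ)^n ≤ 1 := pow_le_one₀ (by norm_num) (by norm_num)
          nlinarith
        obtain ⟨y, hy1, hy2⟩ := hmid p.1 q.1 (by linarith)
        have e : (3/4:ℝ)^(n+1) * t = 3/4 * ((3/4)^n * t) := by rw [pow_succ]; ring
        rw [e]
        have hxy := dist_triangle x p.1 y
        have hyK : y ∈ closedBall x (4*t) := by
          rw [mem_closedBall, dist_comm]; linarith
        by_cases hyZ : (⟨y, hyK⟩ : closedBall x (4*t)) ∈ Z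
        · exact ⟨⟨y, hyK⟩, q, hyZ, hq, by linarith, by linarith⟩
        · exact ⟨p, ⟨y, hyK⟩, hp, hyZ, by linarith, by linarith⟩
    have hZc : IsCompact Z := hZ.1.isCompact
    obtain ⟨δ, hδ, hsep⟩ := hZc.exists_thickening_subset_open hZ.2 subset_rfl
    obtain ⟨n, hn⟩ := exists_pow_lt_of_lt_one (div_pos hδ ht) (by norm_num : (3/4:ℝ) < 1)
    obtain ⟨p, q, hp, hq, hpq, -⟩ := bis n
    apply hq
    apply hsep
    rw [mem_thickening_iff]
    refine ⟨p, hp, ?_⟩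
    rw [lt_div_iff₀ ht] at hn
    rw [dist_comm]
    exact lt_of_le_of_lt hpq hn
  rw [locallyConnectedSpace_iff_connectedComponentIn_open]
  intro F hF x hx
  rw [isOpen_iff_mem_nhds]
  intro y hy
  have hyF : y ∈ F := connectedComponentIn_subset _ _ hy
  obtain ⟨ε, hε, hball⟩ := Metric.isOpen_iff.1 hF y hyF
  set t := min t0 (ε/5)
  have ht : 0 < t := lt_min ht0 (by positivity)
  have ht1 : t ≤ t0 := min_le_left _ _
  have ht2 : t ≤ ε/5 := min_le_right _ _
  refine Filter.mem_of_superset (ball_mem_nhds y ht) fun w hw => ?_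
  have h1 := key y w t ht ht1 (by rw [dist_comm]; exact (mem_ball.1 hw).le)
  have h2 : connectedComponentIn (closedBall y (4*t)) y ⊆ connectedComponentIn F y :=
    connectedComponentIn_mono y (fun z hz => hball (by
      rw [mem_ball]; have := mem_closedBall.1 hz; linarith))
  rw [connectedComponentIn_eq hy]
  exact h2 h1

end Geometry

/-! ### The isometry group and its Haar measure -/

section IsoGroup

variable {X : Type*} [MetricSpace X]

/-- Topology of pointwise convergence on the isometry group. -/
@[reducible] def isoTop (X : Type*) [MetricSpace X] : TopologicalSpace (X ≃ᵢ X) :=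
  TopologicalSpace.induced (fun g => (g : X → X)) inferInstance

attribute [local instance] isoTop

open Filter Topology in
lemma iso_tendsto_iff {ι : Type*} {l : Filter ι} {f : ι → X ≃ᵢ X} {g : X ≃ᵢ X} :
    Tendsto f l (𝓝 g) ↔ ∀ x, Tendsto (fun i => f i x) l (𝓝 (g x)) := by
  have h : IsInducing (fun g : X ≃ᵢ X => (g : X → X)) := ⟨rfl⟩
  rw [h.tendsto_nhds_iff, tendsto_pi_nhds]
  rfl

lemma iso_continuous_eval (x : X) : Continuous (fun g : X ≃ᵢ X => g x) := by
  rw [continuous_iff_continuousAt]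
  intro g
  exact iso_tendsto_iff.1 Filter.tendsto_id x

open Filter Topology in
instance iso_group : IsTopologicalGroup (X ≃ᵢ X) where
  continuous_mul := by
    rw [continuous_iff_continuousAt]
    rintro ⟨g, h⟩
    refine iso_tendsto_iff.2 fun x => ?_
    rw [tendsto_iff_dist_tendsto_zero]
    have h1 : Tendsto (fun p : (X ≃ᵢ X) × (X ≃ᵢ X) => dist (p.2 x) (h x) + dist (p.1 (h x)) (g (h x)))
        (𝓝 (g, h)) (𝓝 0) := by
      have c : Continuous (fun p : (X ≃ᵢ X) × (X ≃ᵢ X) =>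
          dist (p.2 x) (h x) + dist (p.1 (h x)) (g (h x))) := by
        exact (((iso_continuous_eval x).comp continuous_snd).dist continuous_const).add
          (((iso_continuous_eval (h x)).comp continuous_fst).dist continuous_const)
      have := c.tendsto (g, h)
      simpa using this
    refine squeeze_zero (fun _ => dist_nonneg) (fun p => ?_) h1
    have := dist_triangle (p.1 (p.2 x)) (p.1 (h x)) (g (h x))
    rw [p.1.isometry.dist_eq] at this
    exact this
  continuous_inv := by
    rw [continuous_iff_continuousAt]
    intro g
    refine iso_tendsto_iff.2 fun x => ?_
    rw [tendsto_iff_dist_tendsto_zero]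
    have c : Continuous (fun p : X ≃ᵢ X => dist x (p (g⁻¹ x))) := by
      exact continuous_const.dist (iso_continuous_eval (g⁻¹ x))
    have := c.tendsto g
    have e : g (g⁻¹ x) = x := g.apply_symm_apply x
    simp only [e, dist_self] at this
    refine this.congr fun p => ?_
    have e2 : p (p⁻¹ x) = x := p.apply_symm_apply x
    have e3 := p.isometry.dist_eq (p⁻¹ x) (g⁻¹ x)
    rw [e2] at e3
    exact e3

/-- Isometries moving `o` by at most `r`. -/
def isoK (o : X) (r : ℝ) : Set (X ≃ᵢ X) := {g | dist (g o) o ≤ r}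

lemma inv_mem_isoK {o : X} {r : ℝ} {g : X ≃ᵢ X} (hg : g ∈ isoK o r) : g⁻¹ ∈ isoK o r := by
  have e2 : g (g⁻¹ o) = o := g.apply_symm_apply o
  change dist (g⁻¹ o) o ≤ r
  rw [← g.isometry.dist_eq, e2, dist_comm]
  exact hg

open Filter Topology in
lemma isCompact_isoK [ProperSpace X] (o : X) (r : ℝ) : IsCompact (isoK o r) := by
  rw [isCompact_iff_ultrafilter_le_nhds]
  intro F hF
  rw [le_principal_iff] at hF
  have bound : ∀ g ∈ isoK o r, ∀ x, g x ∈ closedBall o (r + dist x o) := by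
    intro g hg x
    have := dist_triangle (g x) (g o) o
    rw [g.isometry.dist_eq] at this
    have h2 : dist (g o) o ≤ r := hg
    rw [mem_closedBall]; linarith
  have lim : ∀ x, ∃ y, Tendsto (fun g : X ≃ᵢ X => g x) F (𝓝 y) := by
    intro x
    obtain ⟨y, -, hy⟩ := isCompact_iff_ultrafilter_le_nhds.1
      (isCompact_closedBall o (r + dist x o)) (F.map (fun g : X ≃ᵢ X => g x)) (by
        rw [le_principal_iff]
        exact Filter.mem_map.2 (Filter.mem_of_superset hF fun g hg => bound g hg x))
    exact ⟨y, hy⟩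
  have lim' : ∀ x, ∃ y, Tendsto (fun g : X ≃ᵢ X => g⁻¹ x) F (𝓝 y) := by
    intro x
    obtain ⟨y, -, hy⟩ := isCompact_iff_ultrafilter_le_nhds.1
      (isCompact_closedBall o (r + dist x o)) (F.map (fun g : X ≃ᵢ X => g⁻¹ x)) (by
        rw [le_principal_iff]
        exact Filter.mem_map.2 (Filter.mem_of_superset hF fun g hg =>
          bound g⁻¹ (inv_mem_isoK hg) x))
    exact ⟨y, hy⟩
  choose f hf using lim
  choose h hh using lim'
  have hiso : ∀ x y, dist (f x) (f y) = dist x y := by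
    intro x y
    have h1 : Tendsto (fun g : X ≃ᵢ X => dist (g x) (g y)) F (𝓝 (dist (f x) (f y))) :=
      (hf x).dist (hf y)
    simp only [IsometryEquiv.dist_eq] at h1
    exact tendsto_nhds_unique h1 tendsto_const_nhds |>.symm ▸ rfl
  have hhf : ∀ x, h (f x) = x := by
    intro x
    have h1 : Tendsto (fun g : X ≃ᵢ X => dist (g⁻¹ (f x)) x) F (𝓝 (dist (h (f x)) x)) :=
      (hh (f x)).dist tendsto_const_nhds
    have h2 : Tendsto (fun g : X ≃ᵢ X => dist (f x) (g x)) F (𝓝 (dist (f x) (f x))) :=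
      tendsto_const_nhds.dist (hf x)
    have h3 : (fun g : X ≃ᵢ X => dist (g⁻¹ (f x)) x) = fun g => dist (f x) (g x) := by
      funext g
      have e2 : g (g⁻¹ (f x)) = f x := g.apply_symm_apply _
      rw [← g.isometry.dist_eq, e2]
    rw [h3] at h1
    have := tendsto_nhds_unique h1 h2
    rwa [dist_self, dist_eq_zero] at this
  have hfh : ∀ x, f (h x) = x := by
    intro x
    have h1 : Tendsto (fun g : X ≃ᵢ X => dist (g (h x)) x) F (𝓝 (dist (f (h x)) x)) :=
      (hf (h x)).dist tendsto_const_nhds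
    have h2 : Tendsto (fun g : X ≃ᵢ X => dist (h x) (g⁻¹ x)) F (𝓝 (dist (h x) (h x))) :=
      tendsto_const_nhds.dist (hh x)
    have h3 : (fun g : X ≃ᵢ X => dist (g (h x)) x) = fun g => dist (h x) (g⁻¹ x) := by
      funext g
      have e2 : g (g⁻¹ x) = x := g.apply_symm_apply _
      have e3 := g.isometry.dist_eq (h x) (g⁻¹ x)
      rw [e2] at e3
      exact e3
    rw [h3] at h1
    have := tendsto_nhds_unique h1 h2
    rwa [dist_self, dist_eq_zero] at this
  let γ : X ≃ᵢ X := IsometryEquiv.mk ⟨f, h, hhf, hfh⟩ (Isometry.of_dist_eq hiso)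
  refine ⟨γ, ?_, ?_⟩
  · have h1 : Tendsto (fun g : X ≃ᵢ X => dist (g o) o) F (𝓝 (dist (f o) o)) :=
      (hf o).dist tendsto_const_nhds
    exact le_of_tendsto h1 hF
  · exact (iso_tendsto_iff (f := fun g => g) (g := γ)).2 hf

lemma isoK_mem_nhds (o : X) : isoK o 1 ∈ nhds (1 : X ≃ᵢ X) := by
  have : IsOpen {g : X ≃ᵢ X | dist (g o) o < 1} := by
    exact isOpen_lt ((iso_continuous_eval o).dist continuous_const) continuous_const
  refine Filter.mem_of_superset (this.mem_nhds ?_) fun g (hg : dist (g o) o < 1) => hg.le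
  simp

instance iso_t2 : T2Space (X ≃ᵢ X) := by
  have hinj : Injective (fun g : X ≃ᵢ X => (g : X → X)) := DFunLike.coe_injective
  exact T2Space.of_injective_continuous hinj continuous_induced_dom

lemma iso_lc [ProperSpace X] [Nonempty X] : LocallyCompactSpace (X ≃ᵢ X) := by
  obtain ⟨o⟩ := ‹Nonempty X›
  exact (isCompact_isoK o 1).locallyCompactSpace_of_mem_nhds_of_group (isoK_mem_nhds o)

lemma iso_sc [ProperSpace X] [Nonempty X] : SigmaCompactSpace (X ≃ᵢ X) := by
  obtain ⟨o⟩ := ‹Nonempty X›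
  refine ⟨⟨fun n => isoK o n, fun n => isCompact_isoK o n, ?_⟩⟩
  refine eq_univ_of_forall fun g => mem_iUnion.2 ?_
  obtain ⟨n, hn⟩ := exists_nat_ge (dist (g o) o)
  exact ⟨n, hn⟩

lemma psym_pow_mem {o y : X} {τ : X ≃ᵢ X} (h : PSym y τ) (n : ℕ) :
    τ^n ∈ isoK o (2 * dist y o) := by
  have h1 : (τ^n) y = y := by
    induction n with
    | zero => rfl
    | succ n ih => rw [pow_succ']; change τ ((τ^n) y) = y; rw [ih, h.1]
  have h2 := dist_triangle ((τ^n) o) ((τ^n) y) o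
  rw [(τ^n).isometry.dist_eq, h1, dist_comm o] at h2
  change dist ((τ^n) o) o ≤ _
  linarith

/-- Existence of an (invariant) Haar measure on the isometry group, in elementary terms. -/
lemma exists_haar [ProperSpace X] [PreconnectedSpace X] (hsym : PointSymmetric X) (o : X) :
    ∃ (_ : MeasurableSpace (X ≃ᵢ X)) (m : Measure (X ≃ᵢ X)), SFinite m ∧
      (∀ r : ℝ, MeasurableSet {g : X ≃ᵢ X | dist (g o) o ≤ r}) ∧
      (∀ [MeasurableSpace X] [BorelSpace X] (x : X), Measurable (fun g : X ≃ᵢ X => g x)) ∧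
      (∀ [MeasurableSpace X] [BorelSpace X] (x : X), Measurable (fun g : X ≃ᵢ X => g⁻¹ x)) ∧
      (∀ r : ℝ, m {g | dist (g o) o ≤ r} < ⊤) ∧
      (∃ c > 0, ∀ h : X ≃ᵢ X, m {g | dist (g o) (h o) < 1/2} = c) ∧
      (∀ (h : X ≃ᵢ X) (r : ℝ), m {g | dist (g⁻¹ o) (h o) ≤ r} = m {g | dist (g o) o ≤ r}) := by
  have : Nonempty X := ⟨o⟩
  have : LocallyCompactSpace (X ≃ᵢ X) := iso_lc
  have : SigmaCompactSpace (X ≃ᵢ X) := iso_sc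
  letI mS : MeasurableSpace (X ≃ᵢ X) := borel _
  have : BorelSpace (X ≃ᵢ X) := ⟨rfl⟩
  let m : Measure (X ≃ᵢ X) := Measure.haar
  have cev := fun x : X => iso_continuous_eval x
  have cinv : ∀ x : X, Continuous (fun g : X ≃ᵢ X => g⁻¹ x) := fun x =>
    (cev x).comp continuous_inv
  have hKmeas : ∀ r : ℝ, MeasurableSet (isoK o r) := fun r =>
    (isCompact_isoK o r).isClosed.measurableSet
  have hKfin : ∀ r, m (isoK o r) < ⊤ := fun r => (isCompact_isoK o r).measure_lt_top
  have hopen : ∀ h : X ≃ᵢ X, IsOpen {g : X ≃ᵢ X | dist (g o) (h o) < 1/2} := fun h => by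
    exact isOpen_lt ((cev o).dist continuous_const) continuous_const
  have hKpos : 0 < m (isoK o 1) :=
    lt_of_lt_of_le ((hopen 1).measure_pos m ⟨1, by simp⟩)
      (measure_mono fun g (hg : dist (g o) o < 1/2) => (by
        change dist (g o) o ≤ 1; linarith))
  let D : (X ≃ᵢ X) → ℝ≥0 := Measure.modularCharacterFun
  have hD : ∀ (g : X ≃ᵢ X) (r : ℝ), m ((fun h => h * g) ⁻¹' isoK o r) = D g * m (isoK o r) := by
    intro g r
    have := Measure.map_right_mul_eq_modularCharacterFun_smul m g
    rw [← Measure.map_apply (measurable_mul_const g) (hKmeas r), this]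
    simp [D]
  have hDmul : ∀ g h, D (g * h) = D g * D h := Measure.modularCharacterFun_map_mul
  have hDone : D 1 = 1 := Measure.modularCharacterFun_map_one
  have hDb : ∀ r : ℝ, ∃ C : ℝ≥0, ∀ g ∈ isoK o r, D g ≤ C := by
    intro r
    refine ⟨(m (isoK o (1 + r)) / m (isoK o 1)).toNNReal, fun g hg => ?_⟩
    have h1 : D g * m (isoK o 1) ≤ m (isoK o (1 + r)) := by
      rw [← hD]
      refine measure_mono fun h hh => ?_
      have hh : dist (h (g o)) o ≤ 1 := hh
      have hg : dist (g o) o ≤ r := hg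
      have := dist_triangle (h o) (h (g o)) o
      rw [h.isometry.dist_eq, dist_comm o] at this
      change dist (h o) o ≤ _
      linarith
    have h2 : (D g : ℝ≥0∞) ≤ m (isoK o (1 + r)) / m (isoK o 1) := by
      rw [ENNReal.le_div_iff_mul_le (Or.inl hKpos.ne') (Or.inl (hKfin 1).ne)]
      exact h1
    rw [← ENNReal.coe_le_coe, ENNReal.coe_toNNReal]
    · exact h2
    · exact (ENNReal.div_lt_top (hKfin _).ne hKpos.ne').ne
  have hDpow : ∀ g (n : ℕ), D (g^n) = D g ^ n := by
    intro g n
    induction n with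
    | zero => simp [hDone]
    | succ n ih => rw [pow_succ, hDmul, ih, pow_succ]
  have hbd1 : ∀ d C : ℝ≥0, (∀ n : ℕ, d ^ n ≤ C) → d ≤ 1 := by
    intro d C hC
    by_contra hlt
    push Not at hlt
    obtain ⟨n, hn⟩ := pow_unbounded_of_one_lt C hlt
    exact absurd (hC n) (not_le.2 hn)
  have hDsym : ∀ τ y, PSym y τ → D τ ≤ 1 := by
    intro τ y hτ
    obtain ⟨C, hC⟩ := hDb (2 * dist y o)
    exact hbd1 _ C fun n => by rw [← hDpow]; exact hC _ (psym_pow_mem hτ n)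
  have hDS : ∀ s ∈ symGroup X, D s = 1 := by
    intro s hs
    refine Subgroup.closure_induction (p := fun s _ => D s = 1) ?_ hDone ?_ ?_ hs
    · rintro τ ⟨y, hτ⟩
      have h1 := hDsym τ y hτ
      have h2 := hDsym _ y hτ.inv
      have h3 := hDmul τ τ⁻¹
      rw [mul_inv_cancel, hDone] at h3
      refine le_antisymm h1 ?_
      rw [h3]
      exact mul_le_of_le_one_right' h2
    · intro a b _ _ ha hb
      rw [hDmul, ha, hb, one_mul]
    · intro a _ ha
      have h3 := hDmul a a⁻¹
      rw [mul_inv_cancel, hDone, ha, one_mul] at h3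
      exact h3.symm
  obtain ⟨C, hC⟩ := hDb 1
  have hDle : ∀ g, D g ≤ C := by
    intro g
    obtain ⟨s, hs, hd⟩ := symGroup_dense hsym o (g o) 1 one_pos
    have h1 : s⁻¹ * g ∈ isoK o 1 := by
      change dist (s⁻¹ (g o)) o ≤ 1
      have e2 : s (s⁻¹ (g o)) = g o := s.apply_symm_apply _
      rw [← s.isometry.dist_eq, e2, dist_comm]
      exact hd.le
    have h2 : g = s * (s⁻¹ * g) := by group
    rw [h2, hDmul, hDS s hs, one_mul]
    exact hC _ h1
  have hDle1 : ∀ g, D g ≤ 1 := fun g => hbd1 _ C fun n => by rw [← hDpow]; exact hDle _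
  have hD1 : ∀ g, D g = 1 := by
    intro g
    have h3 := hDmul g g⁻¹
    rw [mul_inv_cancel, hDone] at h3
    refine le_antisymm (hDle1 g) ?_
    rw [h3]
    exact mul_le_of_le_one_right' (hDle1 _)
  refine ⟨mS, m, inferInstance, hKmeas, ?_, ?_, hKfin, ?_, ?_⟩
  · intro _ _ x
    exact (cev x).measurable
  · intro _ _ x
    exact (cinv x).measurable
  · refine ⟨m {g : X ≃ᵢ X | dist (g o) ((1 : X ≃ᵢ X) o) < 1/2},
      (hopen 1).measure_pos m ⟨1, by simp⟩, fun h => ?_⟩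
    rw [← measure_preimage_mul m h]
    congr 1
    ext g
    change dist ((h * g) o) (h o) < 1/2 ↔ dist (g o) o < 1/2
    rw [show (h * g) o = h (g o) from rfl, h.isometry.dist_eq]
  · intro h r
    have h1 := hD h r
    rw [hD1, ENNReal.coe_one, one_mul] at h1
    change _ = m (isoK o r)
    rw [← h1]
    congr 1
    ext g
    change dist (g⁻¹ o) (h o) ≤ r ↔ dist (g (h o)) o ≤ r
    have e2 : g (g⁻¹ o) = o := g.apply_symm_apply _
    rw [← g.isometry.dist_eq, e2, dist_comm]

end IsoGroup

/-! ### Part B: measure theory on configurations -/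

section ConfigMeas

variable {X : Type*} [MetricSpace X]

/-- The event that there is no point in `B`. -/
def vd (B : Set X) : Set (Config X) := {s | ∀ x ∈ s.1, x ∉ B}

lemma vd_union (A B : Set X) : vd (A ∪ B) = vd A ∩ vd B := by
  ext s
  simp only [vd, mem_setOf_eq, mem_inter_iff, mem_union, not_or]
  exact ⟨fun h => ⟨fun x hx => (h x hx).1, fun x hx => (h x hx).2⟩,
    fun h x hx => ⟨h.1 x hx, h.2 x hx⟩⟩

lemma vd_iUnion {ι : Type*} (B : ι → Set X) : vd (⋃ i, B i) = ⋂ i, vd (B i) := by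
  ext s
  simp only [vd, mem_setOf_eq, mem_iInter, mem_iUnion, not_exists]
  exact ⟨fun h i x hx => h x hx i, fun h x hx i => h i x hx⟩

lemma vd_eq_count (B : Set X) : vd B = {s : Config X | (s.1 ∩ B).encard = (0 : ℕ∞)} := by
  ext s
  simp only [vd, mem_setOf_eq, encard_eq_zero, Set.eq_empty_iff_forall_notMem, mem_inter_iff,
    not_and]

lemma le_encard_iff [SecondCountableTopology X] (n : ℕ) (A : Set X) : (n : ℕ∞) ≤ A.encard ↔
    ∃ f : Fin n → TopologicalSpace.countableBasis X,
      (Pairwise fun i j => Disjoint (f i).1 (f j).1) ∧ ∀ i, (A ∩ (f i).1).Nonempty := by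
  constructor
  · intro h
    obtain ⟨t, htA, htn⟩ := Set.exists_subset_encard_eq h
    have hfin : t.Finite := Set.finite_of_encard_eq_coe htn
    obtain ⟨U, hU, hdis⟩ := hfin.t2_separation
    have hb := TopologicalSpace.isBasis_countableBasis X
    have hex : ∀ x, ∃ v ∈ TopologicalSpace.countableBasis X, x ∈ v ∧ v ⊆ U x := fun x =>
      hb.exists_subset_of_mem_open (hU x).1 (hU x).2
    choose v hv hxv hvU using hex
    have hcard : hfin.toFinset.card = n := by
      have := hfin.encard_eq_coe_toFinset_card
      rw [htn] at this
      exact_mod_cast this.symm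
    let e := hfin.toFinset.equivFinOfCardEq hcard
    refine ⟨fun i => ⟨v (e.symm i), hv _⟩, ?_, ?_⟩
    · intro i j hij
      have h1 : ((e.symm i : hfin.toFinset) : X) ≠ (e.symm j : hfin.toFinset) := by
        intro h2
        exact hij (e.symm.injective (Subtype.ext h2))
      have m1 : ((e.symm i : hfin.toFinset) : X) ∈ t := hfin.mem_toFinset.1 (e.symm i).2
      have m2 : ((e.symm j : hfin.toFinset) : X) ∈ t := hfin.mem_toFinset.1 (e.symm j).2
      exact (hdis m1 m2 h1).mono (hvU _) (hvU _)
    · intro i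
      exact ⟨_, htA (hfin.mem_toFinset.1 (e.symm i).2), hxv _⟩
  · rintro ⟨f, hdis, hne⟩
    choose g hg using hne
    have hinj : Injective g := by
      intro i j hij
      by_contra hne
      exact (Set.disjoint_left.1 (hdis hne)) (hg i).2 (hij ▸ (hg j).2)
    have h1 : (range g).encard = n := by
      rw [← image_univ, hinj.encard_image, encard_univ]
      simp
    rw [← h1]
    exact encard_le_encard (by rintro _ ⟨i, rfl⟩; exact (hg i).1)

variable [MeasurableSpace X]

lemma measurableSet_vd {B : Set X} (hB : MeasurableSet B) : MeasurableSet (vd B) :=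
  MeasurableSpace.measurableSet_generateFrom ⟨B, 0, hB, vd_eq_count B⟩

variable [ProperSpace X] [BorelSpace X]

lemma cfg_generate (X : Type*) [MetricSpace X] [MeasurableSpace X] [ProperSpace X]
    [BorelSpace X] : (Config.instMeasurableSpace : MeasurableSpace (Config X)) =
    MeasurableSpace.generateFrom {A | ∃ B : Set X, MeasurableSet B ∧ IsBounded B ∧ A = vd B} := by
  apply le_antisymm
  · refine MeasurableSpace.generateFrom_le ?_
    rintro _ ⟨B, n, hB, rfl⟩
    set G := MeasurableSpace.generateFrom
      {A : Set (Config X) | ∃ B : Set X, MeasurableSet B ∧ IsBounded B ∧ A = vd B} with hG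
    have hvd : ∀ B : Set X, MeasurableSet B → MeasurableSet[G] (vd B) := by
      intro B hB
      rcases isEmpty_or_nonempty X with hX | ⟨⟨o⟩⟩
      · have : vd B = univ := eq_univ_of_forall fun s x => (hX.false x).elim
        rw [this]; exact MeasurableSet.univ
      have : B = ⋃ n : ℕ, B ∩ closedBall o n := by
        rw [← inter_iUnion, iUnion_closedBall_nat, inter_univ]
      rw [this, vd_iUnion]
      exact MeasurableSet.iInter fun n => MeasurableSpace.measurableSet_generateFrom
        ⟨_, hB.inter measurableSet_closedBall, isBounded_closedBall.subset inter_subset_right, rfl⟩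
    have hle : ∀ n : ℕ, MeasurableSet[G] {s : Config X | (n : ℕ∞) ≤ (s.1 ∩ B).encard} := by
      intro n
      have : {s : Config X | (n : ℕ∞) ≤ (s.1 ∩ B).encard} =
          ⋃ (f : Fin n → TopologicalSpace.countableBasis X)
            (_ : Pairwise fun i j => Disjoint (f i).1 (f j).1), ⋂ i, (vd (B ∩ (f i).1))ᶜ := by
        ext s
        simp only [mem_setOf_eq, le_encard_iff, mem_iUnion, mem_iInter, exists_prop]
        refine exists_congr fun f => and_congr_right fun _ => forall_congr' fun i => ?_
        simp only [vd, mem_compl_iff, mem_setOf_eq, not_forall, not_not]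
        constructor
        · rintro ⟨x, ⟨h1, h2⟩, h3⟩; exact ⟨x, h1, h2, h3⟩
        · rintro ⟨x, h1, h2, h3⟩; exact ⟨x, ⟨h1, h2⟩, h3⟩
      rw [this]
      have : Countable (TopologicalSpace.countableBasis X) :=
        (TopologicalSpace.countable_countableBasis X).to_subtype
      refine MeasurableSet.iUnion fun f => MeasurableSet.iUnion fun _ => MeasurableSet.iInter
        fun i => (hvd _ (hB.inter ?_)).compl
      exact (TopologicalSpace.isOpen_of_mem_countableBasis (f i).2).measurableSet
    induction n using ENat.recTopCoe with
    | top =>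
      have : {s : Config X | (s.1 ∩ B).encard = ⊤} =
          ⋂ n : ℕ, {s : Config X | (n : ℕ∞) ≤ (s.1 ∩ B).encard} := by
        ext s
        simp only [mem_setOf_eq, mem_iInter, ENat.eq_top_iff_forall_ge]
      rw [this]
      exact MeasurableSet.iInter hle
    | coe n =>
      have : {s : Config X | (s.1 ∩ B).encard = n} =
          {s : Config X | (n : ℕ∞) ≤ (s.1 ∩ B).encard} \
          {s : Config X | ((n+1 : ℕ) : ℕ∞) ≤ (s.1 ∩ B).encard} := by
        ext s
        simp only [mem_setOf_eq, mem_diff, not_le, Nat.cast_add, Nat.cast_one]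
        constructor
        · intro h
          rw [h]
          exact ⟨le_rfl, by exact_mod_cast Nat.lt_succ_self n⟩
        · rintro ⟨h1, h2⟩
          exact le_antisymm (ENat.lt_add_one_iff (ENat.coe_ne_top n) |>.1 h2) h1
      rw [this]
      exact (hle n).diff (hle (n+1))
  · refine MeasurableSpace.generateFrom_le ?_
    rintro _ ⟨B, hB, -, rfl⟩
    exact measurableSet_vd hB

lemma measurable_to_config {α : Type*} [MeasurableSpace α] {f : α → Config X}
    (h : ∀ B : Set X, MeasurableSet B → MeasurableSet {a | ∀ x ∈ (f a).1, x ∉ B}) :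
    Measurable f := by
  rw [cfg_generate X]
  refine measurable_generateFrom ?_
  rintro _ ⟨B, hB, -, rfl⟩
  exact h B hB

lemma vd_isPi : IsPiSystem {A : Set (Config X) | ∃ B : Set X, MeasurableSet B ∧ IsBounded B ∧
    A = vd B} := by
  rintro _ ⟨B, hB, hb, rfl⟩ _ ⟨B', hB', hb', rfl⟩ -
  exact ⟨B ∪ B', hB.union hB', hb.union hb', (vd_union B B').symm⟩

lemma config_ext {P P' : Measure (Config X)} [IsProbabilityMeasure P] [IsProbabilityMeasure P']
    (h : ∀ B : Set X, MeasurableSet B → IsBounded B → P (vd B) = P' (vd B)) : P = P' := by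
  refine ext_of_generate_finite _ (cfg_generate X) vd_isPi ?_ (by simp)
  rintro _ ⟨B, hB, hb, rfl⟩
  exact h B hB hb

lemma config_prod_ext {P P' : Measure (Config X)} [IsProbabilityMeasure P]
    [IsProbabilityMeasure P'] {L : Measure (Config X × Config X)}
    (h : ∀ A B : Set X, MeasurableSet A → IsBounded A → MeasurableSet B → IsBounded B →
      L (vd A ×ˢ vd B) = P (vd A) * P' (vd B)) : P.prod P' = L := by
  have huniv : (univ : Set (Config X)) = vd ∅ := by
    ext s; simp [vd]
  have hspan : ∀ Q : Measure (Config X), [IsProbabilityMeasure Q] →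
      Nonempty (Q.FiniteSpanningSetsIn
      {A : Set (Config X) | ∃ B : Set X, MeasurableSet B ∧ IsBounded B ∧ A = vd B}) := by
    intro Q _
    exact ⟨⟨fun _ => univ, fun _ => ⟨∅, MeasurableSet.empty, isBounded_empty, huniv⟩,
      fun _ => by simp, iUnion_const _⟩⟩
  refine Measure.prod_eq_generateFrom (cfg_generate X).symm (cfg_generate X).symm
    vd_isPi vd_isPi (hspan P).some (hspan P').some ?_
  rintro _ ⟨A, hA, hbA, rfl⟩ _ ⟨B, hB, hbB, rfl⟩
  exact h A B hA hbA hB hbB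

/-! operations -/

/-- union of configurations -/
def cunion (s t : Config X) : Config X :=
  ⟨s.1 ∪ t.1, fun K hK => by
    rw [union_inter_distrib_right]; exact (s.2 K hK).union (t.2 K hK)⟩

/-- intersection of a configuration with a set -/
def cinter (D : Set X) (s : Config X) : Config X :=
  ⟨s.1 ∩ D, fun K hK => (s.2 K hK).subset fun _ hz => ⟨hz.1.1, hz.2⟩⟩

/-- range of a finite family -/
def crange {n : ℕ} (f : Fin n → X) : Config X :=
  ⟨range f, fun _ _ => (finite_range f).subset inter_subset_left⟩

lemma preimage_cunion (B : Set X) :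
    (fun p : Config X × Config X => cunion p.1 p.2) ⁻¹' vd B = vd B ×ˢ vd B := by
  ext p
  simp only [cunion, vd, mem_preimage, mem_setOf_eq, mem_union, mem_prod]
  exact ⟨fun h => ⟨fun x hx => h x (Or.inl hx), fun x hx => h x (Or.inr hx)⟩,
    fun h x hx => hx.elim (h.1 x) (h.2 x)⟩

lemma measurable_cunion : Measurable (fun p : Config X × Config X => cunion p.1 p.2) :=
  measurable_to_config fun B hB => by
    change MeasurableSet ((fun p : Config X × Config X => cunion p.1 p.2) ⁻¹' vd B)
    rw [preimage_cunion]
    exact (measurableSet_vd hB).prod (measurableSet_vd hB)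

lemma preimage_cinter (B D : Set X) : cinter D ⁻¹' vd B = vd (B ∩ D) := by
  ext p
  simp only [cinter, vd, mem_preimage, mem_setOf_eq, mem_inter_iff]
  exact ⟨fun h x hx hB => h x ⟨hx, hB.2⟩ hB.1, fun h x hx hB => h x hx.1 ⟨hB, hx.2⟩⟩

lemma measurable_cinter {D : Set X} (hD : MeasurableSet D) : Measurable (cinter D) :=
  measurable_to_config fun B hB => by
    change MeasurableSet (cinter D ⁻¹' vd B)
    rw [preimage_cinter]
    exact measurableSet_vd (hB.inter hD)

lemma preimage_mapIso (γ : X ≃ᵢ X) (B : Set X) : Config.mapIso γ ⁻¹' vd B = vd (γ ⁻¹' B) := by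
  ext p
  simp [Config.mapIso, vd]

lemma measurable_mapIso (γ : X ≃ᵢ X) : Measurable (Config.mapIso γ) :=
  measurable_to_config fun B hB => by
    change MeasurableSet (Config.mapIso γ ⁻¹' vd B)
    rw [preimage_mapIso]
    exact measurableSet_vd (γ.continuous.measurable hB)

lemma preimage_crange {n : ℕ} (B : Set X) :
    (crange : (Fin n → X) → Config X) ⁻¹' vd B = Set.pi univ (fun _ => Bᶜ) := by
  ext f
  simp [crange, vd]

lemma measurable_crange {n : ℕ} : Measurable (crange : (Fin n → X) → Config X) :=
  measurable_to_config fun B hB => by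
    change MeasurableSet (crange ⁻¹' vd B)
    rw [preimage_crange]
    exact MeasurableSet.univ_pi fun _ => hB.compl

end ConfigMeas

section Pois

/-- `exp (-x)` as extended nonnegative real. -/
def Ex (x : ℝ≥0∞) : ℝ≥0∞ := ENNReal.ofReal (Real.exp (-x.toReal))

lemma Ex_add {x y : ℝ≥0∞} (hx : x ≠ ⊤) (hy : y ≠ ⊤) : Ex (x + y) = Ex x * Ex y := by
  rw [Ex, Ex, Ex, ENNReal.toReal_add hx hy, neg_add, Real.exp_add,
    ENNReal.ofReal_mul (Real.exp_pos _).le]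

lemma Ex_zero : Ex 0 = 1 := by simp [Ex]

lemma Ex_pos (x : ℝ≥0∞) : 0 < Ex x := ENNReal.ofReal_pos.2 (Real.exp_pos _)

variable {X : Type*} [MetricSpace X] [MeasurableSpace X]

/-- The void probabilities of `P` are those of a Poisson process of intensity `ν`. -/
def IsVoid (ν : Measure X) (P : Measure (Config X)) : Prop :=
  IsProbabilityMeasure P ∧ ∀ B, MeasurableSet B → IsBounded B → P (vd B) = Ex (ν B)

/-- finiteness on bounded sets -/
def LF (ν : Measure X) : Prop := ∀ B, IsBounded B → ν B ≠ ⊤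

lemma IsPoisson.isVoid {ν : Measure X} {P : Measure (Config X)} (h : IsPoisson ν P)
    (hν : LF ν) : IsVoid ν P := by
  refine ⟨h.1, fun B hB hb => ?_⟩
  have := h.2.1 B hB (hν B hb).lt_top 0
  rw [vd_eq_count]
  simpa [Config.count, Ex] using this

lemma LF.smul {μ : Measure X} (hμ : LF μ) (c : ℝ≥0) : LF ((c : ℝ≥0∞) • μ) := fun B hB => by
  rw [Measure.smul_apply, smul_eq_mul]
  exact ENNReal.mul_ne_top ENNReal.coe_ne_top (hμ B hB)

lemma LF.restrict {μ : Measure X} (hμ : LF μ) (D : Set X) : LF (μ.restrict D) := fun B hB =>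
  ne_top_of_le_ne_top (hμ B hB) (Measure.restrict_apply_le D B)

lemma LF.add {μ ν : Measure X} (hμ : LF μ) (hν : LF ν) : LF (μ + ν) := fun B hB => by
  rw [Measure.add_apply]
  exact ENNReal.add_ne_top.2 ⟨hμ B hB, hν B hB⟩

variable [ProperSpace X] [BorelSpace X]

lemma IsVoid.unique {ν : Measure X} {P P' : Measure (Config X)} (h : IsVoid ν P)
    (h' : IsVoid ν P') : P = P' := by
  have := h.1
  have := h'.1
  exact config_ext fun B hB hb => by rw [h.2 B hB hb, h'.2 B hB hb]

lemma IsVoid.union {ν ν' : Measure X} {P P' : Measure (Config X)} (h : IsVoid ν P)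
    (h' : IsVoid ν' P') (hν : LF ν) (hν' : LF ν') :
    IsVoid (ν + ν') (Measure.map (fun p : Config X × Config X => cunion p.1 p.2) (P.prod P')) := by
  have := h.1
  have := h'.1
  refine ⟨Measure.isProbabilityMeasure_map measurable_cunion.aemeasurable, fun B hB hb => ?_⟩
  rw [Measure.map_apply measurable_cunion (measurableSet_vd hB), preimage_cunion,
    Measure.prod_prod, h.2 B hB hb, h'.2 B hB hb, Measure.add_apply, Ex_add (hν B hb) (hν' B hb)]

lemma IsVoid.inter {ν : Measure X} {P : Measure (Config X)} (h : IsVoid ν P) {D : Set X}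
    (hD : MeasurableSet D) : IsVoid (ν.restrict D) (Measure.map (cinter D) P) := by
  have := h.1
  refine ⟨Measure.isProbabilityMeasure_map (measurable_cinter hD).aemeasurable,
    fun B hB hb => ?_⟩
  rw [Measure.map_apply (measurable_cinter hD) (measurableSet_vd hB), preimage_cinter,
    h.2 _ (hB.inter hD) (hb.subset inter_subset_left), Measure.restrict_apply hB]

lemma IsVoid.iso {ν : Measure X} {P : Measure (Config X)} (h : IsVoid ν P)
    (hν : ∀ γ : X ≃ᵢ X, Measure.map γ ν = ν) (γ : X ≃ᵢ X) :
    Measure.map (Config.mapIso γ) P = P := by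
  have := h.1
  refine IsVoid.unique (ν := ν) ⟨Measure.isProbabilityMeasure_map
    (measurable_mapIso γ).aemeasurable, fun B hB hb => ?_⟩ h
  have hm := γ.continuous.measurable
  have hb' : IsBounded (γ ⁻¹' B) := by
    have h2 : γ ⁻¹' B = γ.symm '' B := by
      ext z
      exact ⟨fun hz => ⟨γ z, hz, γ.symm_apply_apply z⟩, by rintro ⟨w, hw, rfl⟩; simpa using hw⟩
    rw [h2]
    exact γ.symm.isometry.lipschitz.isBounded_image hb
  rw [Measure.map_apply (measurable_mapIso γ) (measurableSet_vd hB), preimage_mapIso,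
    h.2 _ (hm hB) hb', ← Measure.map_apply hm hB, hν]

/-- mixture weights -/
def wt (c R : ℝ) (n : ℕ) : ℝ≥0∞ := ENNReal.ofReal (Real.exp (-(c * R)) * c ^ n / n.factorial)

/-- Poisson process with finite intensity. -/
def pois (c : ℝ≥0) (ρ : Measure X) : Measure (Config X) :=
  Measure.sum fun n : ℕ => wt c (ρ univ).toReal n •
    Measure.map (crange : (Fin n → X) → Config X) (Measure.pi fun _ => ρ)

lemma pois_vd (c : ℝ≥0) (ρ : Measure X) [IsFiniteMeasure ρ] {B : Set X} (hB : MeasurableSet B) :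
    pois c ρ (vd B) = Ex ((c : ℝ≥0∞) * ρ B) := by
  rw [pois, Measure.sum_apply _ (measurableSet_vd hB)]
  set R := (ρ univ).toReal
  set r := (ρ Bᶜ).toReal with hr
  have h1 : ∀ n : ℕ, (wt c R n • Measure.map (crange : (Fin n → X) → Config X)
      (Measure.pi fun _ => ρ)) (vd B) =
      ENNReal.ofReal (Real.exp (-(c * R)) * (((c * r) ^ n) / n.factorial)) := by
    intro n
    rw [Measure.smul_apply, Measure.map_apply measurable_crange (measurableSet_vd hB),
      preimage_crange, Measure.pi_pi, Finset.prod_const, Finset.card_univ, Fintype.card_fin,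
      smul_eq_mul, wt]
    have h2 : ρ Bᶜ = ENNReal.ofReal r := (ENNReal.ofReal_toReal (measure_ne_top _ _)).symm
    rw [h2, ← ENNReal.ofReal_pow ENNReal.toReal_nonneg, ← ENNReal.ofReal_mul (by positivity)]
    congr 1
    rw [mul_pow]; ring
  simp_rw [h1]
  have hs : HasSum (fun n : ℕ => Real.exp (-(c * R)) * ((((c:ℝ) * r) ^ n) / n.factorial))
      (Real.exp (-(c * R)) * Real.exp (c * r)) := by
    refine HasSum.mul_left _ ?_
    rw [Real.exp_eq_exp_ℝ]
    exact NormedSpace.expSeries_div_hasSum_exp _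
  have hr0 : 0 ≤ r := ENNReal.toReal_nonneg
  rw [← ENNReal.ofReal_tsum_of_nonneg (fun n => by positivity) hs.summable, hs.tsum_eq,
    ← Real.exp_add, Ex, ENNReal.toReal_mul, ENNReal.coe_toReal]
  congr 2
  have h3 : R = (ρ B).toReal + r := by
    rw [hr, ← ENNReal.toReal_add (measure_ne_top _ _) (measure_ne_top _ _),
      measure_add_measure_compl hB]
  rw [h3]; ring

lemma vd_empty : vd (∅ : Set X) = univ := by ext s; simp [vd]

lemma pois_isVoid (c : ℝ≥0) (ρ : Measure X) [IsFiniteMeasure ρ] :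
    IsVoid ((c : ℝ≥0∞) • ρ) (pois c ρ) := by
  refine ⟨⟨?_⟩, fun B hB _ => by rw [pois_vd c ρ hB]; rfl⟩
  rw [← vd_empty, pois_vd c ρ MeasurableSet.empty]
  simp [Ex_zero]

lemma pois_ac (c c' : ℝ≥0) (hc' : 0 < c') (ρ : Measure X) : pois c ρ ≪ pois c' ρ := by
  refine Measure.AbsolutelyContinuous.mk fun E hE h0 => ?_
  rw [pois, Measure.sum_apply _ hE] at h0 ⊢
  rw [ENNReal.tsum_eq_zero] at h0 ⊢
  intro n
  have := h0 n
  rw [Measure.smul_apply, smul_eq_mul, mul_eq_zero] at this ⊢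
  right
  refine this.resolve_left ?_
  have : 0 < (c' : ℝ) := hc'
  exact (ENNReal.ofReal_pos.2 (by positivity)).ne'

lemma exists_isVoid {μ : Measure X} (hμ : LF μ) (c : ℝ≥0) (o : X) :
    ∃ P, IsVoid ((c : ℝ≥0∞) • μ) P := by
  let A : ℕ → Set X := fun i => {x | ⌊dist x o⌋₊ = i}
  have hAm : ∀ i, MeasurableSet (A i) := fun i => by
    have : Measurable (fun x : X => ⌊dist x o⌋₊) :=
      Nat.measurable_floor.comp (continuous_id.dist continuous_const).measurable
    exact this (measurableSet_singleton i)
  have hAb : ∀ i, A i ⊆ closedBall o (i + 1) := by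
    intro i x hx
    rw [mem_closedBall]
    have h1 := Nat.lt_floor_add_one (dist x o)
    have h2 : ⌊dist x o⌋₊ = i := hx
    rw [h2] at h1
    exact h1.le
  have hAd : Pairwise (fun i j => Disjoint (A i) (A j)) := by
    intro i j hij
    refine Set.disjoint_left.2 fun x (hx : _ = i) (hx' : _ = j) => hij (hx.symm.trans hx')
  have hfin : ∀ i, IsFiniteMeasure (μ.restrict (A i)) := fun i =>
    ⟨by rw [Measure.restrict_apply_univ]
        exact (hμ _ (isBounded_closedBall.subset (hAb i))).lt_top⟩
  let Q : ℕ → Measure (Config X) := fun i => pois c (μ.restrict (A i))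
  have hQ : ∀ i, IsProbabilityMeasure (Q i) := fun i => (pois_isVoid c (μ.restrict (A i))).1
  have hbd : ∀ K : Set X, IsBounded K → ∃ N : ℕ, ∀ x ∈ K, ∀ i, x ∈ A i → i < N := by
    intro K hK
    obtain ⟨R, hR⟩ := hK.subset_closedBall o
    refine ⟨⌊R⌋₊ + 1, fun x hx i hi => ?_⟩
    have h1 : dist x o ≤ R := hR hx
    have h2 : ⌊dist x o⌋₊ = i := hi
    have := Nat.floor_le_floor h1
    omega
  let U : (ℕ → Config X) → Config X := fun ω => ⟨⋃ i, (ω i).1 ∩ A i, fun K hK => by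
    obtain ⟨N, hN⟩ := hbd K hK
    refine ((Finset.range N).finite_toSet.biUnion fun i _ => (ω i).2 K hK).subset ?_
    rintro x ⟨hx, hxK⟩
    obtain ⟨i, hi, hiA⟩ := mem_iUnion.1 hx
    exact mem_biUnion (by simpa using hN x hxK i hiA) ⟨hi, hxK⟩⟩
  have hpre : ∀ B, U ⁻¹' vd B = ⋂ i, (fun ω : ℕ → Config X => ω i) ⁻¹' vd (B ∩ A i) := by
    intro B
    ext ω
    simp only [U, vd, mem_preimage, mem_setOf_eq, mem_iInter]
    refine ⟨fun h i x hx hB => h x (mem_iUnion.2 ⟨i, hx, hB.2⟩) hB.1, fun h x hx hB => ?_⟩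
    obtain ⟨i, hi⟩ := mem_iUnion.1 hx
    exact h i x hi.1 ⟨hB, hi.2⟩
  have hU : Measurable U := measurable_to_config fun B hB => by
    change MeasurableSet (U ⁻¹' vd B)
    rw [hpre]
    exact MeasurableSet.iInter fun i => (measurable_pi_apply i)
      (measurableSet_vd (hB.inter (hAm i)))
  refine ⟨Measure.map U (Measure.infinitePi Q),
    Measure.isProbabilityMeasure_map hU.aemeasurable, fun B hB hb => ?_⟩
  obtain ⟨N, hN⟩ := hbd B hb
  have hpre2 : U ⁻¹' vd B = Set.pi (Finset.range N) (fun i => vd (B ∩ A i)) := by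
    rw [hpre]
    ext ω
    simp only [mem_iInter, mem_preimage, Set.mem_pi, Finset.coe_range, mem_Iio]
    refine ⟨fun h i _ => h i, fun h i => ?_⟩
    by_cases hi : i < N
    · exact h i hi
    · exact fun x _ hx => hi (hN x hx.1 i hx.2)
  rw [Measure.map_apply hU (measurableSet_vd hB), hpre2,
    Measure.infinitePi_pi _ (fun i _ => measurableSet_vd (hB.inter (hAm i)))]
  have hB' : μ B = ∑ i ∈ Finset.range N, μ (B ∩ A i) := by
    have h1 : B = ⋃ i ∈ Finset.range N, B ∩ A i := by
      ext x
      simp only [mem_iUnion, mem_inter_iff, exists_prop, Finset.mem_range]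
      exact ⟨fun hx => ⟨⌊dist x o⌋₊, hN x hx _ rfl, hx, rfl⟩, fun ⟨_, _, hx, _⟩ => hx⟩
    conv_lhs => rw [h1]
    rw [measure_biUnion_finset]
    · intro i _ j _ hij
      exact (hAd hij).mono inter_subset_right inter_subset_right
    · exact fun i _ => hB.inter (hAm i)
  have hterm : ∀ i, Q i (vd (B ∩ A i)) = Ex (c * μ (B ∩ A i)) := by
    intro i
    rw [pois_vd c _ (hB.inter (hAm i)), Measure.restrict_apply (hB.inter (hAm i)),
      inter_assoc, inter_self]
  simp_rw [hterm]
  rw [Measure.smul_apply, smul_eq_mul, hB', Finset.mul_sum]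
  have hne : ∀ i, (c : ℝ≥0∞) * μ (B ∩ A i) ≠ ⊤ := fun i =>
    ENNReal.mul_ne_top ENNReal.coe_ne_top (hμ _ (hb.subset inter_subset_left))
  clear hpre2 hB' hN
  induction N with
  | zero => simp [Ex_zero]
  | succ N ih =>
    rw [Finset.prod_range_succ, Finset.sum_range_succ, Ex_add _ (hne N), ih]
    exact (ENNReal.sum_lt_top.2 fun i _ => (hne i).lt_top).ne

/-- Moving the points in `D` from the first to the second configuration. -/
def flip (D : Set X) (p : Config X × Config X) : Config X × Config X :=
  (cinter Dᶜ p.1, cunion p.2 (cinter D p.1))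

lemma measurable_flip {D : Set X} (hD : MeasurableSet D) : Measurable (flip D) :=
  ((measurable_cinter hD.compl).comp measurable_fst).prodMk
    (measurable_cunion.comp (measurable_snd.prodMk ((measurable_cinter hD).comp measurable_fst)))

lemma flip_ac {μ : Measure X} (hμ : LF μ) {a b : ℝ≥0} (hb : 0 < b) {P₁ P₃ : Measure (Config X)}
    (h₁ : IsVoid ((a : ℝ≥0∞) • μ) P₁) (h₃ : IsVoid ((b : ℝ≥0∞) • μ) P₃)
    {D : Set X} (hD : MeasurableSet D) (hDb : IsBounded D) :
    Measure.map (flip D) (P₁.prod P₃) ≪ P₁.prod P₃ := by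
  have hfin : IsFiniteMeasure (μ.restrict D) :=
    ⟨by rw [Measure.restrict_apply_univ]; exact (hμ _ hDb).lt_top⟩
  have := h₁.1
  have := h₃.1
  have hin := pois_isVoid a (μ.restrict D)
  have hPb := h₃.union hin (hμ.smul b) ((hμ.restrict D).smul a)
  set Pb := Measure.map (fun p : Config X × Config X => cunion p.1 p.2)
    (P₃.prod (pois a (μ.restrict D))) with hPbdef
  have hPa := h₁.inter hD.compl
  set Pa := Measure.map (cinter Dᶜ) P₁ with hPadef
  have := hPa.1
  have := hPb.1
  have hfl : Pa.prod Pb = Measure.map (flip D) (P₁.prod P₃) := by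
    refine config_prod_ext fun A B hA hbA hB hbB => ?_
    rw [Measure.map_apply (measurable_flip hD) ((measurableSet_vd hA).prod (measurableSet_vd hB))]
    have hpre : flip D ⁻¹' (vd A ×ˢ vd B) = vd ((A ∩ Dᶜ) ∪ (B ∩ D)) ×ˢ vd B := by
      ext p
      simp only [mem_preimage, mem_prod, flip, vd_union, mem_inter_iff]
      have e1 : cinter Dᶜ p.1 ∈ vd A ↔ p.1 ∈ vd (A ∩ Dᶜ) := by
        rw [← preimage_cinter]; rfl
      have e2 : cinter D p.1 ∈ vd B ↔ p.1 ∈ vd (B ∩ D) := by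
        rw [← preimage_cinter]; rfl
      have e3 : cunion p.2 (cinter D p.1) ∈ vd B ↔ p.2 ∈ vd B ∧ cinter D p.1 ∈ vd B := by
        have := Set.ext_iff.1 (preimage_cunion B) (p.2, cinter D p.1)
        exact this
      rw [e1, e3, e2]; tauto
    have hb1 : IsBounded (A ∩ Dᶜ) := hbA.subset inter_subset_left
    have hb2 : IsBounded (B ∩ D) := hbB.subset inter_subset_left
    rw [hpre, Measure.prod_prod, h₁.2 _ ((hA.inter hD.compl).union (hB.inter hD)) (hb1.union hb2),
      h₃.2 B hB hbB, hPa.2 A hA hbA, hPb.2 B hB hbB, Measure.add_apply,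
      Ex_add (hμ.smul b B hbB) ((hμ.restrict D).smul a B hbB),
      measure_union (((disjoint_compl_left (a := D)).mono inter_subset_right inter_subset_right))
        (hB.inter hD), Ex_add (hμ.smul a _ hb1) (hμ.smul a _ hb2), Measure.restrict_apply hA]
    have : ((a : ℝ≥0∞) • μ.restrict D) B = ((a : ℝ≥0∞) • μ) (B ∩ D) := by
      rw [Measure.smul_apply, Measure.smul_apply, Measure.restrict_apply hB]
    rw [this]; ring
  rw [← hfl]
  refine Measure.AbsolutelyContinuous.prod ?_ ?_
  · -- deletion
    have hind : Pa.prod (Measure.map (cinter D) P₁) =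
        Measure.map (fun s => (cinter Dᶜ s, cinter D s)) P₁ := by
      have hin2 := h₁.inter hD
      have := hin2.1
      have hm : Measurable (fun s : Config X => (cinter Dᶜ s, cinter D s)) :=
        (measurable_cinter hD.compl).prodMk (measurable_cinter hD)
      refine config_prod_ext fun A B hA hbA hB hbB => ?_
      have hb1 : IsBounded (A ∩ Dᶜ) := hbA.subset inter_subset_left
      have hb2 : IsBounded (B ∩ D) := hbB.subset inter_subset_left
      have hpre : (fun s : Config X => (cinter Dᶜ s, cinter D s)) ⁻¹' (vd A ×ˢ vd B) =
          vd ((A ∩ Dᶜ) ∪ (B ∩ D)) := by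
        rw [vd_union, ← preimage_cinter, ← preimage_cinter]; rfl
      rw [Measure.map_apply hm ((measurableSet_vd hA).prod (measurableSet_vd hB)), hpre,
        h₁.2 _ ((hA.inter hD.compl).union (hB.inter hD)) (hb1.union hb2),
        hPa.2 A hA hbA, hin2.2 B hB hbB, Measure.restrict_apply hA, Measure.restrict_apply hB,
        measure_union (((disjoint_compl_left (a := D)).mono inter_subset_right inter_subset_right))
        (hB.inter hD), Ex_add (hμ.smul a _ hb1) (hμ.smul a _ hb2)]
    refine Measure.AbsolutelyContinuous.mk fun E hE h0 => ?_
    have hm : Measurable (fun s : Config X => (cinter Dᶜ s, cinter D s)) :=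
      (measurable_cinter hD.compl).prodMk (measurable_cinter hD)
    have h1 : Pa.prod (Measure.map (cinter D) P₁) (E ×ˢ vd D) = 0 := by
      rw [hind, Measure.map_apply hm (hE.prod (measurableSet_vd hD))]
      refine measure_mono_null ?_ h0
      rintro s ⟨hs1, hs2⟩
      have : cinter Dᶜ s = s := by
        apply Subtype.ext
        change s.1 ∩ Dᶜ = s.1
        refine inter_eq_left.2 fun x hx hxD => hs2 x ⟨hx, hxD⟩ hxD
      simp only at hs1
      rwa [this] at hs1
    rw [Measure.prod_prod, mul_eq_zero] at h1
    refine h1.resolve_right ?_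
    rw [Measure.map_apply (measurable_cinter hD) (measurableSet_vd hD), preimage_cinter,
      inter_self, h₁.2 D hD hDb]
    exact (Ex_pos _).ne'
  · -- insertion
    have hout := h₃.inter hD.compl
    set Po := Measure.map (cinter Dᶜ) P₃
    have := hout.1
    have hloc : LF (((b : ℝ≥0∞) • μ).restrict Dᶜ) := (hμ.smul b).restrict _
    have e1 : Pb = Measure.map (fun p : Config X × Config X => cunion p.1 p.2)
        (Po.prod (pois (b + a) (μ.restrict D))) := by
      refine IsVoid.unique hPb ?_
      have := hout.union (pois_isVoid (b + a) (μ.restrict D)) hloc ((hμ.restrict D).smul _)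
      convert this using 1
      rw [ENNReal.coe_add, add_smul, ← add_assoc]
      congr 1
      rw [← Measure.restrict_smul, add_comm, Measure.restrict_add_restrict_compl hD]
    have e2 : P₃ = Measure.map (fun p : Config X × Config X => cunion p.1 p.2)
        (Po.prod (pois b (μ.restrict D))) := by
      refine IsVoid.unique h₃ ?_
      have := hout.union (pois_isVoid b (μ.restrict D)) hloc ((hμ.restrict D).smul _)
      convert this using 1
      rw [← Measure.restrict_smul, add_comm, Measure.restrict_add_restrict_compl hD]
    rw [e1, e2]
    have := (pois_isVoid (b + a) (μ.restrict D)).1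
    have := (pois_isVoid b (μ.restrict D)).1
    refine Measure.AbsolutelyContinuous.map ?_ measurable_cunion
    exact Measure.AbsolutelyContinuous.rfl.prod (pois_ac _ _ hb _)

end Pois

/-! ### Part C: deterministic topology -/

section Topo

variable {X : Type*} [MetricSpace X]

/-- local adjacency inside `V` -/
def Adj (V : Set X) (p q : X) : Prop := ∃ c, q ∈ connectedComponentIn (V ∩ ball c 2) p

lemma cc_symm {F : Set X} {p q : X} (h : q ∈ connectedComponentIn F p) :
    p ∈ connectedComponentIn F q := by
  have hp : p ∈ F := by
    by_contra hp
    rw [connectedComponentIn_eq_empty hp] at h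
    exact h
  rw [← connectedComponentIn_eq h]
  exact mem_connectedComponentIn hp

lemma cc_left {F : Set X} {p q : X} (h : q ∈ connectedComponentIn F p) : p ∈ F :=
  connectedComponentIn_subset _ _ (cc_symm h)

lemma cc_right {F : Set X} {p q : X} (h : q ∈ connectedComponentIn F p) : q ∈ F :=
  connectedComponentIn_subset _ _ h

lemma cc_trans {F : Set X} {p q r : X} (h : q ∈ connectedComponentIn F p)
    (h' : r ∈ connectedComponentIn F q) : r ∈ connectedComponentIn F p := by
  rwa [connectedComponentIn_eq h]

lemma Adj.symm {V : Set X} {p q : X} (h : Adj V p q) : Adj V q p :=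
  let ⟨c, hc⟩ := h
  ⟨c, cc_symm hc⟩

lemma Adj.refl {V : Set X} {p : X} (h : p ∈ V) : Adj V p p :=
  ⟨p, mem_connectedComponentIn ⟨h, mem_ball_self two_pos⟩⟩

lemma Adj.left {V : Set X} {p q : X} (h : Adj V p q) : p ∈ V :=
  let ⟨_, hc⟩ := h
  (cc_left hc).1

lemma Adj.right {V : Set X} {p q : X} (h : Adj V p q) : q ∈ V := h.symm.left

lemma Adj.cc {V : Set X} {p q : X} (h : Adj V p q) : q ∈ connectedComponentIn V p :=
  let ⟨_, hc⟩ := h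
  connectedComponentIn_mono p inter_subset_left hc

lemma Adj.dist {V : Set X} {p q : X} (h : Adj V p q) : dist p q ≤ 4 := by
  obtain ⟨c, hc⟩ := h
  have h1 := mem_ball.1 (cc_left hc).2
  have h2 := mem_ball.1 (cc_right hc).2
  have := dist_triangle_right p q c
  linarith

lemma Adj.isOpen [LocallyConnectedSpace X] {V : Set X} (hV : IsOpen V) (p : X) :
    IsOpen {q | Adj V p q} := by
  have : {q | Adj V p q} = ⋃ c, connectedComponentIn (V ∩ ball c 2) p := by
    ext q; simp [Adj]
  rw [this]
  exact isOpen_iUnion fun c => (hV.inter isOpen_ball).connectedComponentIn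

lemma Adj.isOpen' [LocallyConnectedSpace X] {V : Set X} (hV : IsOpen V) (q : X) :
    IsOpen {p | Adj V p q} := by
  convert Adj.isOpen hV q using 2
  ext p
  exact ⟨Adj.symm, Adj.symm⟩

/-- chains of local adjacencies -/
def RR (V : Set X) : ℕ → X → X → Prop
  | 0, p, q => Adj V p q
  | (n+1), p, q => ∃ z, RR V n p z ∧ Adj V z q

lemma RR.cc {V : Set X} {n : ℕ} {p q : X} (h : RR V n p q) : q ∈ connectedComponentIn V p := by
  induction n generalizing q with
  | zero => exact Adj.cc h
  | succ n ih =>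
    obtain ⟨z, h1, h2⟩ := h
    exact cc_trans (ih h1) h2.cc

lemma RR.dist {V : Set X} {n : ℕ} {p q : X} (h : RR V n p q) : dist p q ≤ 4 * (n + 1) := by
  induction n generalizing q with
  | zero => have := Adj.dist h; simpa using this
  | succ n ih =>
    obtain ⟨z, h1, h2⟩ := h
    have := ih h1
    have := h2.dist
    have := dist_triangle p z q
    push_cast; linarith

lemma RR.succ {V : Set X} {n : ℕ} {p q : X} (h : RR V n p q) : RR V (n+1) p q :=
  ⟨q, h, Adj.refl (cc_right h.cc)⟩

lemma RR.mono {V : Set X} {n m : ℕ} (hnm : n ≤ m) {p q : X} (h : RR V n p q) : RR V m p q := by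
  induction hnm with
  | refl => exact h
  | step _ ih => exact ih.succ

lemma RR.trans {V : Set X} {a b : ℕ} {p z q : X} (h : RR V a p z) (h' : RR V b z q) :
    RR V (a + b + 1) p q := by
  induction b generalizing q with
  | zero => exact ⟨z, h, h'⟩
  | succ b ih =>
    obtain ⟨y, h1, h2⟩ := h'
    exact ⟨y, ih h1, h2⟩

lemma RR.cons {V : Set X} {b : ℕ} {p z q : X} (h : Adj V p z) (h' : RR V b z q) :
    RR V (b + 1) p q := by
  have := RR.trans (a := 0) (V := V) h h'
  rwa [zero_add] at this

lemma RR.isOpen [LocallyConnectedSpace X] {V : Set X} (hV : IsOpen V) (n : ℕ) (p : X) :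
    IsOpen {q | RR V n p q} := by
  cases n with
  | zero => exact Adj.isOpen hV p
  | succ n =>
    have : {q | RR V (n+1) p q} = ⋃ (z) (_ : RR V n p z), {q | Adj V z q} := by
      ext q; simp [RR]
    rw [this]
    exact isOpen_iUnion fun z => isOpen_iUnion fun _ => Adj.isOpen hV z

lemma RR_exists [LocallyConnectedSpace X] {V : Set X} (hV : IsOpen V) {p q : X}
    (h : q ∈ connectedComponentIn V p) : ∃ n, RR V n p q := by
  have hp := cc_left h
  set A := {q | ∃ n, RR V n p q}
  set B := {q | q ∈ V ∧ ¬ ∃ n, RR V n p q}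
  have hA : IsOpen A := by
    have : A = ⋃ n, {q | RR V n p q} := by ext q; simp [A]
    rw [this]; exact isOpen_iUnion fun n => RR.isOpen hV n p
  have hB : IsOpen B := by
    rw [isOpen_iff_mem_nhds]
    rintro x ⟨hx, hx'⟩
    refine Filter.mem_of_superset ((Adj.isOpen hV x).mem_nhds (Adj.refl hx)) ?_
    intro y (hy : Adj V x y)
    refine ⟨hy.right, ?_⟩
    rintro ⟨n, hn⟩
    exact hx' ⟨n+1, y, hn, hy.symm⟩
  have hsub : connectedComponentIn V p ⊆ A :=
    isPreconnected_connectedComponentIn.subset_left_of_subset_union hA hB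
      (Set.disjoint_left.2 fun x h1 h2 => h2.2 h1)
      (fun x hx => (Classical.em (∃ n, RR V n p x)).imp id fun h' => ⟨cc_right hx, h'⟩)
      ⟨p, mem_connectedComponentIn hp, 0, Adj.refl hp⟩
  exact hsub h

/-- points in unbounded components -/
def UU (W : Set X) : Set X := {u | ¬ IsBounded (connectedComponentIn W u)}

lemma UU_sub {W : Set X} {u : X} (h : u ∈ UU W) : u ∈ W := by
  by_contra hu
  apply h
  rw [connectedComponentIn_eq_empty hu]
  exact isBounded_empty

lemma UU_cc {W : Set X} {u v : X} (h : u ∈ UU W) (hv : v ∈ connectedComponentIn W u) :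
    v ∈ UU W := by
  change ¬ _
  rw [← connectedComponentIn_eq hv]
  exact h

lemma UU_mono {W V : Set X} (hWV : W ⊆ V) : UU W ⊆ UU V := fun u hu hb =>
  hu (hb.subset (connectedComponentIn_mono u hWV))

lemma UU_isOpen [LocallyConnectedSpace X] {W : Set X} (hW : IsOpen W) : IsOpen (UU W) := by
  rw [isOpen_iff_mem_nhds]
  intro u hu
  exact Filter.mem_of_superset (hW.connectedComponentIn.mem_nhds
    (mem_connectedComponentIn (UU_sub hu))) fun v hv => UU_cc hu hv

/-- The transport relation, with points restricted to `Q`. -/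
def FQ (Q : Set X) (s m : ℕ) (V W : Set X) (x y : X) : Prop :=
  ∃ p ∈ Q, p ∈ V ∧ dist p x < 1 ∧ ∃ n, (∃ u ∈ Q, u ∈ UU W ∧ RR V n p u) ∧
    ∀ u ∈ Q, u ∈ UU W → RR V (n + s) p u → dist u y ≤ m

lemma FQ_to_univ [LocallyConnectedSpace X] {Q : Set X} (hQ : Dense Q) {s m : ℕ} {V W : Set X}
    (hV : IsOpen V) (hW : IsOpen W) {x y : X} (h : FQ Q s m V W x y) :
    FQ univ s m V W x y := by
  obtain ⟨p, hp, hpV, hd, n, ⟨u, hu, h1, h2⟩, h3⟩ := h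
  refine ⟨p, trivial, hpV, hd, n, ⟨u, trivial, h1, h2⟩, fun v _ hv hr => ?_⟩
  by_contra hlt
  push Not at hlt
  have ho : IsOpen (UU W ∩ {v | RR V (n+s) p v} ∩ {v | (m:ℝ) < dist v y}) :=
    ((UU_isOpen hW).inter (RR.isOpen hV _ _)).inter
      (isOpen_lt continuous_const (continuous_id.dist continuous_const))
  obtain ⟨v', hv', hvQ⟩ := hQ.inter_open_nonempty _ ho ⟨v, ⟨hv, hr⟩, hlt⟩
  exact absurd (h3 v' hvQ hv'.1.1 hv'.1.2) (not_le.2 hv'.2)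

lemma FQ_of_univ [LocallyConnectedSpace X] {Q : Set X} (hQ : Dense Q) {s m : ℕ} {V W : Set X}
    (hV : IsOpen V) (hW : IsOpen W) {x y : X} (h : FQ univ (s+2) m V W x y) :
    FQ Q s m V W x y := by
  obtain ⟨p, -, hpV, hd, n, ⟨u, -, h1, h2⟩, h3⟩ := h
  obtain ⟨p', ⟨hp1, hp2⟩, hp'Q⟩ := hQ.inter_open_nonempty ({q | Adj V p q} ∩ ball x 1)
    ((Adj.isOpen hV p).inter isOpen_ball) ⟨p, Adj.refl hpV, hd⟩
  have hp1 : Adj V p p' := hp1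
  have hu : RR V (n+1) p' u := RR.cons hp1.symm h2
  obtain ⟨u', ⟨hu1, hu2⟩, hu'Q⟩ := hQ.inter_open_nonempty (UU W ∩ {v | RR V (n+1) p' v})
    ((UU_isOpen hW).inter (RR.isOpen hV _ _)) ⟨u, h1, hu⟩
  refine ⟨p', hp'Q, hp1.right, hp2, n+1, ⟨u', hu'Q, hu1, hu2⟩, fun v _ hv hr => ?_⟩
  refine h3 v trivial hv ?_
  have := RR.cons hp1 hr
  convert this using 1
  omega

/-! equivariance -/

lemma cc_image (γ : X ≃ᵢ X) {F : Set X} {p q : X} (h : q ∈ connectedComponentIn F p) :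
    γ q ∈ connectedComponentIn (γ '' F) (γ p) := by
  have := γ.toHomeomorph.image_connectedComponentIn (s := F) (cc_left h)
  change γ '' connectedComponentIn F p = _ at this
  have h2 : γ q ∈ γ '' connectedComponentIn F p := mem_image_of_mem _ h
  rw [this] at h2
  exact h2

lemma cc_image_iff (γ : X ≃ᵢ X) {F : Set X} {p q : X} :
    γ q ∈ connectedComponentIn (γ '' F) (γ p) ↔ q ∈ connectedComponentIn F p := by
  refine ⟨fun h => ?_, cc_image γ⟩
  have := cc_image γ.symm h
  simpa [← image_comp, image_image] using this

lemma Adj.image (γ : X ≃ᵢ X) {V : Set X} {p q : X} (h : Adj V p q) :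
    Adj (γ '' V) (γ p) (γ q) := by
  obtain ⟨c, hc⟩ := h
  refine ⟨γ c, ?_⟩
  have := cc_image γ hc
  rwa [image_inter γ.injective, γ.image_ball] at this

lemma RR.image (γ : X ≃ᵢ X) {V : Set X} {n : ℕ} {p q : X} (h : RR V n p q) :
    RR (γ '' V) n (γ p) (γ q) := by
  induction n generalizing q with
  | zero => exact Adj.image γ h
  | succ n ih =>
    obtain ⟨z, h1, h2⟩ := h
    exact ⟨γ z, ih h1, h2.image γ⟩

lemma symm_image_image (γ : X ≃ᵢ X) (V : Set X) : γ.symm '' (γ '' V) = V := by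
  simp [← image_comp, image_image]

lemma RR.image_iff (γ : X ≃ᵢ X) {V : Set X} {n : ℕ} {p q : X} :
    RR (γ '' V) n (γ p) (γ q) ↔ RR V n p q := by
  refine ⟨fun h => ?_, RR.image γ⟩
  have := RR.image γ.symm h
  rwa [symm_image_image, γ.symm_apply_apply, γ.symm_apply_apply] at this

lemma UU_image (γ : X ≃ᵢ X) {W : Set X} {u : X} (h : u ∈ UU W) : γ u ∈ UU (γ '' W) := by
  intro hb
  apply h
  have h1 : γ '' connectedComponentIn W u = connectedComponentIn (γ '' W) (γ u) :=
    γ.toHomeomorph.image_connectedComponentIn (s := W) (UU_sub h)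
  rw [← h1] at hb
  have := γ.symm.isometry.lipschitz.isBounded_image hb
  rwa [symm_image_image] at this

lemma FX_image (γ : X ≃ᵢ X) {s m : ℕ} {V W : Set X} {x y : X} (h : FQ univ s m V W x y) :
    FQ univ s m (γ '' V) (γ '' W) (γ x) (γ y) := by
  obtain ⟨p, -, hpV, hd, n, ⟨u, -, h1, h2⟩, h3⟩ := h
  refine ⟨γ p, trivial, mem_image_of_mem _ hpV, by rwa [γ.isometry.dist_eq], n,
    ⟨γ u, trivial, UU_image γ h1, h2.image γ⟩, fun v _ hv hr => ?_⟩
  obtain ⟨v, rfl⟩ := γ.surjective v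
  rw [γ.isometry.dist_eq]
  refine h3 v trivial ?_ ((RR.image_iff γ).1 hr)
  have := UU_image γ.symm hv
  rwa [symm_image_image, γ.symm_apply_apply] at this

/-! local classes -/

/-- The local classes at `q`. -/
def lcl (V : Set X) (q : X) : Set (Set X) :=
  {C | ∃ p ∈ V, dist p q < 1 ∧ C = connectedComponentIn (V ∩ ball q 2) p}

lemma lcl_le (V : Set X) (q : X) : (lcl V q).encard ≤ numComps (V ∩ closedBall q 1) := by
  classical
  let f : Set X → Set X := fun C => if h : C.Nonempty then
    connectedComponentIn (V ∩ ball q 2) h.some else ∅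
  have hsub : lcl V q ⊆ f '' comps (V ∩ closedBall q 1) := by
    rintro _ ⟨p, hpV, hd, rfl⟩
    have hp : p ∈ V ∩ closedBall q 1 := ⟨hpV, hd.le⟩
    refine ⟨_, ⟨p, hp, rfl⟩, ?_⟩
    have hne : (connectedComponentIn (V ∩ closedBall q 1) p).Nonempty :=
      ⟨p, mem_connectedComponentIn hp⟩
    simp only [f, dif_pos hne]
    refine (connectedComponentIn_eq ?_).symm
    refine connectedComponentIn_mono p ?_ hne.some_mem
    exact inter_subset_inter_right _ (closedBall_subset_ball (by norm_num))
  exact (encard_le_encard hsub).trans (encard_image_le _ _)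

lemma FQ_class {Q : Set X} {m : ℕ} {V W : Set X} {p p' y y' : X} {n n' : ℕ}
    (hadj : Adj V p p')
    (h1 : ∃ u ∈ Q, u ∈ UU W ∧ RR V n p u)
    (h2 : ∀ u ∈ Q, u ∈ UU W → RR V (n + 1) p u → dist u y ≤ m)
    (h1' : ∃ u ∈ Q, u ∈ UU W ∧ RR V n' p' u)
    (h2' : ∀ u ∈ Q, u ∈ UU W → RR V (n' + 1) p' u → dist u y' ≤ m) : dist y y' ≤ 2 * m := by
  rcases le_total n n' with hle | hle
  · obtain ⟨u, hu, huU, hr⟩ := h1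
    have a1 := h2 u hu huU hr.succ
    have a2 := h2' u hu huU ((RR.cons hadj.symm hr).mono (by omega))
    have := dist_triangle_left y y' u
    linarith
  · obtain ⟨u, hu, huU, hr⟩ := h1'
    have a1 := h2 u hu huU ((RR.cons hadj hr).mono (by omega))
    have a2 := h2' u hu huU hr.succ
    have := dist_triangle_left y y' u
    linarith

/-- In-mass: the deterministic core of the argument. -/
lemma in_mass [ProperSpace X] [LocallyConnectedSpace X] {Q : Set X} (hQ : Dense Q)
    {V₁ V W : Set X} (hV : IsOpen V) (hW : IsOpen W) (hWV : W ⊆ V₁) (h1V : V₁ ⊆ V)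
    (o : X) (R : ℝ) (hK : ∀ x ∈ V, R < dist x o → x ∈ V₁)
    (hfin : ∀ q ∈ Q, (lcl V q).Finite)
    {p0 u0 : X} (hC : ∀ u ∈ UU W, u ∉ connectedComponentIn V₁ p0)
    (hu0 : u0 ∈ UU W) (hpu : u0 ∈ connectedComponentIn V p0) :
    ∃ m : ℕ, ∀ p ∈ Q, p ∈ connectedComponentIn V₁ p0 → ∀ x, dist p x < 1 →
      FQ Q 3 m V W x o := by
  classical
  -- finitely many local representatives
  have hrep : ∃ F : Set X, F.Finite ∧ ∀ w ∈ V, dist w o ≤ R → ∃ f ∈ F, Adj V w f := by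
    have hcov : closedBall o R ⊆ ⋃ q ∈ Q, ball q 1 := fun x _ => by
      obtain ⟨q, hq, hqd⟩ := hQ.exists_dist_lt x one_pos
      exact mem_biUnion hq hqd
    obtain ⟨T, hTQ, hTfin, hTcov⟩ := (isCompact_closedBall o R).elim_finite_subcover_image
      (fun q _ => isOpen_ball) hcov
    let rep : Set X → X := fun C => if h : C.Nonempty then h.some else o
    refine ⟨⋃ q ∈ T, rep '' lcl V q, hTfin.biUnion fun q hq => (hfin q (hTQ hq)).image _, ?_⟩
    intro w hwV hw
    obtain ⟨q, hq, hwq⟩ := mem_iUnion₂.1 (hTcov hw)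
    have hwq : dist w q < 1 := hwq
    refine ⟨rep (connectedComponentIn (V ∩ ball q 2) w), mem_biUnion hq
      (mem_image_of_mem _ ⟨w, hwV, hwq, rfl⟩), q, ?_⟩
    have hne : (connectedComponentIn (V ∩ ball q 2) w).Nonempty :=
      ⟨w, mem_connectedComponentIn ⟨hwV, by rw [mem_ball]; linarith⟩⟩
    simp only [rep, dif_pos hne]
    exact hne.some_mem
  obtain ⟨F, hF, hFrep⟩ := hrep
  have hstar : ∃ N : ℕ, ∀ w ∈ V, dist w o ≤ R → (∃ n, ∃ u ∈ UU W, RR V n w u) →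
      ∃ u ∈ UU W, RR V N w u := by
    have h1 : ∀ f, ∃ N : ℕ, (∃ n, ∃ u ∈ UU W, RR V n f u) → ∃ u ∈ UU W, RR V N f u := by
      intro f
      by_cases h : ∃ n, ∃ u ∈ UU W, RR V n f u
      · obtain ⟨n, hn⟩ := h
        exact ⟨n, fun _ => hn⟩
      · exact ⟨0, fun h' => absurd h' h⟩
    choose N hN using h1
    refine ⟨hF.toFinset.sup N + 1, fun w hwV hw ⟨n, u, hu, hr⟩ => ?_⟩
    obtain ⟨f, hf, hadj⟩ := hFrep w hwV hw
    obtain ⟨u', hu', hr'⟩ := hN f ⟨n+1, u, hu, RR.cons hadj.symm hr⟩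
    refine ⟨u', hu', (RR.cons hadj hr').mono ?_⟩
    have : N f ≤ hF.toFinset.sup N := Finset.le_sup (hF.mem_toFinset.2 hf)
    omega
  obtain ⟨N, hN⟩ := hstar
  set C := connectedComponentIn V₁ p0 with hCdef
  -- splitting
  have base : ∀ p ∈ C, ∀ u, Adj V p u → u ∈ C ∨
      ∃ w ∈ V, dist w o ≤ R ∧ Adj V p w ∧ Adj V w u := by
    rintro p hp u ⟨c, hc⟩
    by_cases hne : ∃ w ∈ connectedComponentIn (V ∩ ball c 2) p, dist w o ≤ R
    · obtain ⟨w, hw, hwR⟩ := hne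
      exact Or.inr ⟨w, (cc_right hw).1, hwR, ⟨c, hw⟩, ⟨c, cc_trans (cc_symm hw) hc⟩⟩
    · left
      push Not at hne
      have hsub : connectedComponentIn (V ∩ ball c 2) p ⊆ V₁ := fun w hw =>
        hK w (cc_right hw).1 (hne w hw)
      have h2 : connectedComponentIn (V ∩ ball c 2) p ⊆ connectedComponentIn V₁ p :=
        isPreconnected_connectedComponentIn.subset_connectedComponentIn
          (mem_connectedComponentIn (cc_left hc)) hsub
      exact cc_trans hp (h2 hc)
  have split : ∀ p ∈ C, ∀ n u, RR V n p u → u ∈ C ∨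
      ∃ i j, i + j = n ∧ ∃ w ∈ V, dist w o ≤ R ∧ RR V i p w ∧ RR V j w u := by
    intro p hp n
    induction n with
    | zero =>
      intro u hu
      rcases base p hp u hu with h | ⟨w, hw, hwR, h1, h2⟩
      · exact Or.inl h
      · exact Or.inr ⟨0, 0, rfl, w, hw, hwR, h1, h2⟩
    | succ n ih =>
      rintro u ⟨z, hz, hzu⟩
      rcases ih z hz with h | ⟨i, j, hij, w, hw, hwR, h1, h2⟩
      · rcases base z h u hzu with h | ⟨w, hw, hwR, h1, h2⟩
        · exact Or.inl h
        · exact Or.inr ⟨n+1, 0, rfl, w, hw, hwR, ⟨z, hz, h1⟩, h2⟩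
      · exact Or.inr ⟨i, j+1, by omega, w, hw, hwR, h1, ⟨z, h2, hzu⟩⟩
  obtain ⟨m, hm⟩ := exists_nat_ge (R + 4 * (N + 5))
  refine ⟨m, fun p hpQ hpC x hpx => ?_⟩
  have hpV : p ∈ V := h1V (cc_right hpC)
  have hex : ∃ n, ∃ u ∈ UU W, RR V n p u := by
    have h1 : u0 ∈ connectedComponentIn V p :=
      cc_trans (cc_symm (connectedComponentIn_mono p0 h1V hpC)) hpu
    obtain ⟨n, hn⟩ := RR_exists hV h1
    exact ⟨n, u0, hu0, hn⟩
  set n := Nat.find hex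
  obtain ⟨u, hu, hru⟩ : ∃ u ∈ UU W, RR V n p u := Nat.find_spec hex
  obtain ⟨u', ⟨hu1, hu2⟩, hu'Q⟩ := hQ.inter_open_nonempty (UU W ∩ {v | RR V n p v})
    ((UU_isOpen hW).inter (RR.isOpen hV _ _)) ⟨u, hu, hru⟩
  refine ⟨p, hpQ, hpV, hpx, n, ⟨u', hu'Q, hu1, hu2⟩, fun v _ hv hr => ?_⟩
  rcases split p hpC _ v hr with h | ⟨i, j, hij, w, hw, hwR, h1, h2⟩
  · exact absurd h (hC v hv)
  · obtain ⟨v', hv', hr'⟩ := hN w hw hwR ⟨j, v, hv, h2⟩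
    have hmin : n ≤ i + N + 1 := Nat.find_min' hex ⟨v', hv', h1.trans hr'⟩
    have hj : j ≤ N + 4 := by omega
    have hd := h2.dist
    have hj' : (j : ℝ) ≤ N + 4 := by exact_mod_cast hj
    have := dist_triangle v w o
    rw [dist_comm v w] at this
    linarith

end Topo

section RandomOpen

variable {X : Type*} [MetricSpace X]

lemma cc_sub_of_open {U S : Set X} {p : X} (hS : IsOpen S) (hU : IsOpen (U \ S)) (hp : p ∈ S) :
    connectedComponentIn U p ⊆ S := by
  by_cases hpU : p ∈ U
  · refine IsPreconnected.subset_left_of_subset_union hS hU disjoint_sdiff_self_right ?_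
      ⟨p, mem_connectedComponentIn hpU, hp⟩ isPreconnected_connectedComponentIn
    intro x hx
    by_cases h : x ∈ S
    · exact Or.inl h
    · exact Or.inr ⟨connectedComponentIn_subset _ _ hx, h⟩
  · rw [connectedComponentIn_eq_empty hpU]; exact empty_subset _

/-- components of an increasing union of open sets -/
lemma cc_iUnion [LocallyConnectedSpace X] {U : ℕ → Set X} (hU : ∀ n, IsOpen (U n))
    (hmono : Monotone U) {p q : X} (h : q ∈ connectedComponentIn (⋃ n, U n) p) :
    ∃ n, q ∈ connectedComponentIn (U n) p := by
  have hp : p ∈ ⋃ n, U n := by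
    by_contra hp
    rw [connectedComponentIn_eq_empty hp] at h
    exact h
  have := cc_sub_of_open (U := ⋃ n, U n) (S := ⋃ n, connectedComponentIn (U n) p) (p := p)
    (isOpen_iUnion fun n => (hU n).connectedComponentIn) ?_ ?_ h
  · simpa using this
  · rw [isOpen_iff_forall_mem_open]
    rintro x ⟨hx, hxS⟩
    obtain ⟨n, hn⟩ := mem_iUnion.1 hx
    refine ⟨connectedComponentIn (U n) x, ?_, (hU n).connectedComponentIn,
      mem_connectedComponentIn hn⟩
    intro y hy
    refine ⟨mem_iUnion.2 ⟨n, connectedComponentIn_subset _ _ hy⟩, fun hyS => hxS ?_⟩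
    obtain ⟨k, hk⟩ := mem_iUnion.1 hyS
    refine mem_iUnion.2 ⟨max n k, ?_⟩
    exact cc_trans (connectedComponentIn_mono _ (hmono (le_max_right n k)) hk)
      (cc_symm (connectedComponentIn_mono _ (hmono (le_max_left n k)) hy))
  · obtain ⟨n, hn⟩ := mem_iUnion.1 hp
    exact mem_iUnion.2 ⟨n, mem_connectedComponentIn hn⟩

def LL (V : Set X) (a b : X) : Prop :=
  ∃ k : ℕ, closedBall a ((1/2)^k) ⊆ V ∧ b ∈ connectedComponentIn (ball a ((1/2)^k)) a

def RN (Q V : Set X) (p : X) : ℕ → X → Prop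
  | 0, q => p = q
  | (n+1), q => ∃ z ∈ Q, RN Q V p n z ∧ LL V z q

lemma LL.cc {V : Set X} {a b : X} (h : LL V a b) : b ∈ connectedComponentIn V a := by
  obtain ⟨k, h1, h2⟩ := h
  exact connectedComponentIn_mono _ (ball_subset_closedBall.trans h1) h2

lemma RN.cc {Q V : Set X} {p q : X} (hp : p ∈ V) {n : ℕ} (h : RN Q V p n q) :
    q ∈ connectedComponentIn V p := by
  induction n generalizing q with
  | zero => cases h; exact mem_connectedComponentIn hp
  | succ n ih =>
    obtain ⟨z, -, h1, h2⟩ := h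
    exact cc_trans (ih h1) h2.cc

lemma exists_pow_closedBall {V : Set X} (hV : IsOpen V) {x : X} (hx : x ∈ V) :
    ∃ k : ℕ, closedBall x ((1/2)^k) ⊆ V := by
  obtain ⟨ε, hε, h⟩ := Metric.isOpen_iff.1 hV x hx
  obtain ⟨k, hk⟩ := exists_pow_lt_of_lt_one hε (by norm_num : (1/2 : ℝ) < 1)
  exact ⟨k, (closedBall_subset_ball hk).trans h⟩

lemma RN_exists [LocallyConnectedSpace X] {Q V : Set X} (hQ : Dense Q) (hV : IsOpen V) {p q : X}
    (hp : p ∈ Q) (h : q ∈ connectedComponentIn V p) : ∃ n, RN Q V p n q := by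
  have hpV : p ∈ V := cc_left h
  have := cc_sub_of_open (U := V) (S := {x | ∃ z ∈ Q, ∃ n, RN Q V p n z ∧ LL V z x}) (p := p)
    ?_ ?_ ?_ h
  · obtain ⟨z, hz, n, h1, h2⟩ := this
    exact ⟨n+1, z, hz, h1, h2⟩
  · rw [isOpen_iff_forall_mem_open]
    rintro x ⟨z, hz, n, h1, k, hk, hx⟩
    exact ⟨connectedComponentIn (ball z ((1/2)^k)) z, fun y hy => ⟨z, hz, n, h1, k, hk, hy⟩,
      isOpen_ball.connectedComponentIn, hx⟩
  · rw [isOpen_iff_forall_mem_open]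
    rintro x ⟨hxV, hx⟩
    obtain ⟨k, hk⟩ := exists_pow_closedBall hV hxV
    have hr : (0:ℝ) < (1/2)^(k+2) := by positivity
    have e1 : ((1:ℝ)/2)^(k+1) = 2 * (1/2)^(k+2) := by ring
    have e2 : ((1:ℝ)/2)^k = 4 * (1/2)^(k+2) := by ring
    refine ⟨connectedComponentIn (ball x ((1/2)^(k+2))) x, ?_, isOpen_ball.connectedComponentIn,
      mem_connectedComponentIn (mem_ball_self hr)⟩
    intro y hy
    have hyb := connectedComponentIn_subset _ _ hy
    refine ⟨hk (by rw [mem_closedBall]; rw [mem_ball] at hyb; linarith), fun hyA => hx ?_⟩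
    obtain ⟨z, hz, n, h1, j, hj, hyj⟩ := hyA
    obtain ⟨w, hwO, hwQ⟩ := hQ.inter_open_nonempty _
      ((isOpen_ball.connectedComponentIn (x := x) (F := ball x ((1/2)^(k+2)))).inter
      (isOpen_ball.connectedComponentIn (x := z) (F := ball z ((1/2)^j)))) ⟨y, hy, hyj⟩
    have hwb := connectedComponentIn_subset _ _ hwO.1
    rw [mem_ball] at hwb
    refine ⟨w, hwQ, n+1, ⟨z, hz, h1, j, hj, hwO.2⟩, k+1, ?_, ?_⟩
    · refine Subset.trans (closedBall_subset_closedBall' ?_) hk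
      linarith
    · refine connectedComponentIn_mono _ (ball_subset_ball' ?_) (cc_symm hwO.1)
      rw [dist_comm]; linarith
  · obtain ⟨k, hk⟩ := exists_pow_closedBall hV hpV
    exact ⟨p, hp, 0, rfl, k, hk, mem_connectedComponentIn (mem_ball_self (by positivity))⟩

/-- a random open set -/
def RO {Ω : Type*} [MeasurableSpace Ω] (V : Ω → Set X) : Prop :=
  (∀ ω, IsOpen (V ω)) ∧ ∀ a r, MeasurableSet {ω | closedBall a r ⊆ V ω}

variable {Ω : Type*} [MeasurableSpace Ω] {V W : Ω → Set X}

lemma RO.inter (h : RO V) {O : Set X} (hO : IsOpen O) : RO (fun ω => V ω ∩ O) := by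
  refine ⟨fun ω => (h.1 ω).inter hO, fun a r => ?_⟩
  simp only [subset_inter_iff]
  exact (h.2 a r).inter (MeasurableSet.const _)

lemma RO.mem (h : RO V) (p : X) : MeasurableSet {ω | p ∈ V ω} := by
  have := h.2 p 0
  simpa using this

lemma meas_exists_mem {Q : Set X} (hQ : Q.Countable) {f : X → Ω → Prop}
    (hf : ∀ q ∈ Q, MeasurableSet {ω | f q ω}) : MeasurableSet {ω | ∃ q ∈ Q, f q ω} := by
  have : {ω | ∃ q ∈ Q, f q ω} = ⋃ q ∈ Q, {ω | f q ω} := by ext; simp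
  rw [this]
  exact MeasurableSet.biUnion hQ hf

lemma meas_forall_mem {Q : Set X} (hQ : Q.Countable) {f : X → Ω → Prop}
    (hf : ∀ q ∈ Q, MeasurableSet {ω | f q ω}) : MeasurableSet {ω | ∀ q ∈ Q, f q ω} := by
  have : {ω | ∀ q ∈ Q, f q ω} = ⋂ q ∈ Q, {ω | f q ω} := by ext; simp
  rw [this]
  exact MeasurableSet.biInter hQ hf

lemma meas_exists {ι : Type*} [Countable ι] {f : ι → Ω → Prop}
    (hf : ∀ q, MeasurableSet {ω | f q ω}) : MeasurableSet {ω | ∃ q, f q ω} := by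
  rw [setOf_exists]
  exact MeasurableSet.iUnion hf

lemma meas_forall {ι : Type*} [Countable ι] {f : ι → Ω → Prop}
    (hf : ∀ q, MeasurableSet {ω | f q ω}) : MeasurableSet {ω | ∀ q, f q ω} := by
  rw [setOf_forall]
  exact MeasurableSet.iInter hf

lemma meas_imp {f g : Ω → Prop} (hf : MeasurableSet {ω | f ω}) (hg : MeasurableSet {ω | g ω}) :
    MeasurableSet {ω | f ω → g ω} := by
  have : {ω | f ω → g ω} = {ω | f ω}ᶜ ∪ {ω | g ω} := by ext; simp [imp_iff_not_or]
  rw [this]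
  exact hf.compl.union hg

lemma meas_RN (h : RO V) {Q : Set X} (hQ : Q.Countable) (p : X) (n : ℕ) (q : X) :
    MeasurableSet {ω | RN Q (V ω) p n q} := by
  induction n generalizing q with
  | zero => exact MeasurableSet.const _
  | succ n ih =>
    refine meas_exists_mem hQ fun z _ => (ih z).inter (meas_exists fun k => ?_)
    exact (h.2 _ _).inter (MeasurableSet.const _)

variable [LocallyConnectedSpace X] [SecondCountableTopology X]

lemma RO.cc (h : RO V) (p q : X) : MeasurableSet {ω | q ∈ connectedComponentIn (V ω) p} := by
  obtain ⟨Q, hQc, hQd⟩ := TopologicalSpace.exists_countable_dense X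
  have : {ω | q ∈ connectedComponentIn (V ω) p} =
      {ω | p ∈ V ω} ∩ {ω | ∃ n, RN (insert p Q) (V ω) p n q} := by
    ext ω
    constructor
    · intro hq
      exact ⟨cc_left (F := V ω) hq, RN_exists (hQd.mono (subset_insert _ _)) (h.1 ω) (mem_insert _ _) hq⟩
    · rintro ⟨h1, n, h2⟩
      exact h2.cc h1
  rw [this]
  exact (h.mem p).inter (meas_exists fun n => meas_RN h (hQc.insert p) p n q)

lemma Adj_iff_dense {V : Set X} (hV : IsOpen V) {Q : Set X} (hQ : Dense Q) {p q : X} :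
    Adj V p q ↔ ∃ c ∈ Q, q ∈ connectedComponentIn (V ∩ ball c 2) p := by
  constructor
  · rintro ⟨c, hc⟩
    have hU : V ∩ ball c 2 = ⋃ n : ℕ, V ∩ ball c (2 - 1/((n:ℝ)+1)) := by
      ext x
      simp only [mem_inter_iff, mem_ball, mem_iUnion]
      constructor
      · rintro ⟨h1, h2⟩
        obtain ⟨n, hn⟩ := exists_nat_one_div_lt (sub_pos.2 h2)
        exact ⟨n, h1, by linarith⟩
      · rintro ⟨n, h1, h2⟩
        have : (0:ℝ) < 1/((n:ℝ)+1) := by positivity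
        exact ⟨h1, by linarith⟩
    rw [hU] at hc
    obtain ⟨n, hn⟩ := cc_iUnion (fun n => hV.inter isOpen_ball) (fun i j hij => by
      refine inter_subset_inter_right _ (ball_subset_ball ?_)
      have : 1/((j:ℝ)+1) ≤ 1/((i:ℝ)+1) := by
        apply one_div_le_one_div_of_le (by positivity)
        have : (i:ℝ) ≤ j := by exact_mod_cast hij
        linarith
      linarith) hc
    have hpos : (0:ℝ) < 1/((n:ℝ)+1) := by positivity
    obtain ⟨c', hc', hd⟩ := hQ.exists_dist_lt c hpos
    refine ⟨c', hc', connectedComponentIn_mono _ (inter_subset_inter_right _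
      (ball_subset_ball' ?_)) hn⟩
    linarith
  · rintro ⟨c, -, h⟩
    exact ⟨c, h⟩

lemma RO.adj (h : RO V) (p q : X) : MeasurableSet {ω | Adj (V ω) p q} := by
  obtain ⟨Q, hQc, hQd⟩ := TopologicalSpace.exists_countable_dense X
  have : {ω | Adj (V ω) p q} = {ω | ∃ c ∈ Q, q ∈ connectedComponentIn (V ω ∩ ball c 2) p} := by
    ext ω
    exact Adj_iff_dense (h.1 ω) hQd
  rw [this]
  exact meas_exists_mem hQc fun c _ => (h.inter isOpen_ball).cc p q

lemma RO.rr (h : RO V) (n : ℕ) (p q : X) : MeasurableSet {ω | RR (V ω) n p q} := by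
  obtain ⟨Q, hQc, hQd⟩ := TopologicalSpace.exists_countable_dense X
  induction n generalizing q with
  | zero => exact h.adj p q
  | succ n ih =>
    have : {ω | RR (V ω) (n+1) p q} = {ω | ∃ z ∈ Q, RR (V ω) n p z ∧ Adj (V ω) z q} := by
      ext ω
      constructor
      · rintro ⟨z, h1, h2⟩
        obtain ⟨w, ⟨h3, h4⟩, hwQ⟩ := hQd.inter_open_nonempty _
          ((RR.isOpen (h.1 ω) n p).inter (Adj.isOpen' (h.1 ω) q)) ⟨z, h1, h2⟩
        exact ⟨w, hwQ, h3, h4⟩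
      · rintro ⟨z, -, h1, h2⟩
        exact ⟨z, h1, h2⟩
    rw [this]
    exact meas_exists_mem hQc fun z _ => (ih z).inter (h.adj z q)

lemma UU_iff {W : Set X} (hW : IsOpen W) {Q : Set X} (hQ : Dense Q) (o u : X) :
    u ∈ UU W ↔ ∀ N : ℕ, ∃ q ∈ Q, q ∈ connectedComponentIn W u ∧ N < dist q o := by
  constructor
  · intro h N
    by_contra hcon
    push Not at hcon
    apply h
    rw [isBounded_iff_subset_closedBall o]
    refine ⟨N, fun x hx => ?_⟩
    by_contra hx'
    obtain ⟨q, ⟨hq1, hq2⟩, hqQ⟩ := hQ.inter_open_nonempty _ (hW.connectedComponentIn.inter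
      (isClosed_closedBall (x := o) (ε := (N:ℝ))).isOpen_compl) ⟨x, hx, hx'⟩
    exact hq2 (hcon q hqQ hq1)
  · intro h hb
    obtain ⟨r, hr⟩ := (isBounded_iff_subset_closedBall o).1 hb
    obtain ⟨N, hN⟩ := exists_nat_ge r
    obtain ⟨q, -, h1, h2⟩ := h N
    have := hr h1
    rw [mem_closedBall] at this
    linarith

lemma RO.uu [Nonempty X] (h : RO W) (u : X) : MeasurableSet {ω | u ∈ UU (W ω)} := by
  obtain ⟨Q, hQc, hQd⟩ := TopologicalSpace.exists_countable_dense X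
  inhabit X
  have : {ω | u ∈ UU (W ω)} = {ω | ∀ N : ℕ, ∃ q ∈ Q, q ∈ connectedComponentIn (W ω) u ∧
      N < dist q default} := by
    ext ω
    exact UU_iff (h.1 ω) hQd default u
  rw [this]
  exact meas_forall fun N => meas_exists_mem hQc fun q _ => (h.cc u q).inter (MeasurableSet.const _)

lemma numUcomps_one_iff {V : Set X} (hV : IsOpen V) {Q : Set X} (hQ : Dense Q) :
    numUcomps V = 1 ↔ ∃ u ∈ Q, u ∈ UU V ∧ ∀ u' ∈ Q, u' ∈ UU V → u' ∈ connectedComponentIn V u := by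
  rw [numUcomps, encard_eq_one]
  constructor
  · rintro ⟨C, hC⟩
    have hCm : C ∈ ucomps V := by rw [hC]; rfl
    obtain ⟨⟨x, hx, rfl⟩, hxb⟩ := hCm
    obtain ⟨u, hu, huQ⟩ := hQ.inter_open_nonempty _ (hV.connectedComponentIn (x := x))
      ⟨x, mem_connectedComponentIn hx⟩
    refine ⟨u, huQ, UU_cc hxb hu, fun u' _ hu'U => ?_⟩
    have : connectedComponentIn V u' ∈ ucomps V := ⟨⟨u', UU_sub hu'U, rfl⟩, hu'U⟩
    rw [hC, mem_singleton_iff, connectedComponentIn_eq hu] at this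
    rw [← this]
    exact mem_connectedComponentIn (UU_sub hu'U)
  · rintro ⟨u, -, hu, h⟩
    refine ⟨connectedComponentIn V u, ?_⟩
    ext C
    rw [mem_singleton_iff]
    constructor
    · rintro ⟨⟨x, hx, rfl⟩, hxb⟩
      obtain ⟨v, hv, hvQ⟩ := hQ.inter_open_nonempty _ (hV.connectedComponentIn (x := x))
        ⟨x, mem_connectedComponentIn hx⟩
      rw [connectedComponentIn_eq hv, connectedComponentIn_eq (h v hvQ (UU_cc hxb hv))]
    · rintro rfl
      exact ⟨⟨u, UU_sub hu, rfl⟩, hu⟩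

lemma RO.one [Nonempty X] (h : RO V) : MeasurableSet {ω | numUcomps (V ω) = 1} := by
  obtain ⟨Q, hQc, hQd⟩ := TopologicalSpace.exists_countable_dense X
  have : {ω | numUcomps (V ω) = 1} = {ω | ∃ u ∈ Q, u ∈ UU (V ω) ∧ ∀ u' ∈ Q, u' ∈ UU (V ω) →
      u' ∈ connectedComponentIn (V ω) u} := by
    ext ω
    exact numUcomps_one_iff (h.1 ω) hQd
  rw [this]
  exact meas_exists_mem hQc fun u _ => (h.uu u).inter <| meas_forall_mem hQc fun u' _ =>
    meas_imp (h.uu u') (h.cc u u')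

lemma lcl_finite_iff {V : Set X} (hV : IsOpen V) {Q : Set X} (hQ : Dense Q) (q : X) :
    (lcl V q).Finite ↔ ∃ F : Finset Q, ∀ p ∈ Q, p ∈ V ∧ dist p q < 1 →
      ∃ f : Q, f ∈ F ∧ p ∈ connectedComponentIn (V ∩ ball q 2) f := by
  classical
  have hO : IsOpen (V ∩ ball q 2) := hV.inter isOpen_ball
  constructor
  · intro h
    have hne : ∀ C ∈ lcl V q, ∃ f : Q, (f : X) ∈ C := by
      rintro _ ⟨p, hp, hd, rfl⟩
      have hpO : p ∈ V ∩ ball q 2 := ⟨hp, by rw [mem_ball]; linarith⟩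
      obtain ⟨u, hu, huQ⟩ := hQ.inter_open_nonempty _ (hO.connectedComponentIn (x := p))
        ⟨p, mem_connectedComponentIn hpO⟩
      exact ⟨⟨u, huQ⟩, hu⟩
    haveI : Nonempty Q := ⟨⟨_, (hQ.inter_open_nonempty univ isOpen_univ ⟨q, trivial⟩).some_mem.2⟩⟩
    choose! f hf using hne
    by_cases hN : (lcl V q).Nonempty
    · refine ⟨(h.image f).toFinset, fun p hpQ hp => ?_⟩
      have hC : connectedComponentIn (V ∩ ball q 2) p ∈ lcl V q := ⟨p, hp.1, hp.2, rfl⟩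
      exact ⟨f _, by simpa using ⟨_, hC, rfl⟩, cc_symm (hf _ hC)⟩
    · refine ⟨∅, fun p hpQ hp => (hN ⟨_, p, hp.1, hp.2, rfl⟩).elim⟩
  · rintro ⟨F, hF⟩
    refine (F.finite_toSet.image (fun f : Q => connectedComponentIn (V ∩ ball q 2) (f:X))).subset ?_
    rintro _ ⟨p, hp, hd, rfl⟩
    have hpO : p ∈ V ∩ ball q 2 := ⟨hp, by rw [mem_ball]; linarith⟩
    obtain ⟨u, ⟨hu, hu1⟩, huQ⟩ := hQ.inter_open_nonempty _
      ((hO.connectedComponentIn (x := p)).inter (isOpen_ball (x := q) (ε := 1)))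
      ⟨p, mem_connectedComponentIn hpO, hd⟩
    obtain ⟨f, hfF, hf⟩ := hF u huQ ⟨(connectedComponentIn_subset _ _ hu).1, hu1⟩
    refine ⟨f, hfF, ?_⟩
    change connectedComponentIn (V ∩ ball q 2) (f:X) = _
    rw [connectedComponentIn_eq hu, connectedComponentIn_eq hf]

lemma RO.lclfin (h : RO V) (q : X) : MeasurableSet {ω | (lcl (V ω) q).Finite} := by
  obtain ⟨Q, hQc, hQd⟩ := TopologicalSpace.exists_countable_dense X
  have : {ω | (lcl (V ω) q).Finite} = {ω | ∃ F : Finset Q, ∀ p ∈ Q, p ∈ V ω ∧ dist p q < 1 →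
      ∃ f : Q, f ∈ F ∧ p ∈ connectedComponentIn (V ω ∩ ball q 2) f} := by
    ext ω
    exact lcl_finite_iff (h.1 ω) hQd q
  rw [this]
  haveI : Countable Q := hQc.to_subtype
  exact meas_exists fun F => meas_forall_mem hQc fun p _ => meas_imp
    ((h.mem p).inter (MeasurableSet.const _)) <| meas_exists fun f =>
      (MeasurableSet.const _).inter ((h.inter isOpen_ball).cc _ _)

end RandomOpen

section VacantFacts

variable {X : Type*} [MetricSpace X]

lemma mem_vacant {s : Config X} {x : X} : x ∈ vacant s ↔ ∀ p ∈ s.1, 1 < dist x p := by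
  simp [vacant, occupied]

lemma isOpen_vacant (s : Config X) : IsOpen (vacant s) := by
  rw [isOpen_iff_forall_mem_open]
  intro x hx
  have hfin := s.2 (closedBall x 2) isBounded_closedBall
  refine ⟨ball x 1 ∩ ⋂ p ∈ s.1 ∩ closedBall x 2, (closedBall p 1)ᶜ, ?_, ?_, ?_⟩
  · rintro y ⟨hy, hy2⟩
    rw [mem_vacant]
    intro p hp
    by_cases h : p ∈ closedBall x 2
    · have := mem_iInter₂.1 hy2 p ⟨hp, h⟩
      simpa using this
    · rw [mem_closedBall, not_le] at h
      rw [mem_ball] at hy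
      have := dist_triangle p y x
      rw [dist_comm y p]
      linarith
  · exact isOpen_ball.inter (hfin.isOpen_biInter fun p _ => isClosed_closedBall.isOpen_compl)
  · refine ⟨mem_ball_self one_pos, mem_iInter₂.2 fun p hp => ?_⟩
    have := mem_vacant.1 hx p hp.1
    simpa using this

lemma vacant_mapIso (γ : X ≃ᵢ X) (s : Config X) : vacant (Config.mapIso γ s) = γ '' vacant s := by
  ext x
  constructor
  · intro h
    refine ⟨γ.symm x, ?_, by simp⟩
    rw [mem_vacant] at h ⊢
    intro p hp
    have := h (γ p) ⟨p, hp, rfl⟩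
    rw [← γ.isometry.dist_eq]
    simpa using this
  · rintro ⟨y, hy, rfl⟩
    rw [mem_vacant] at hy ⊢
    rintro _ ⟨p, hp, rfl⟩
    rw [γ.isometry.dist_eq]
    exact hy p hp

lemma vacant_cunion_sub (s t : Config X) : vacant (cunion s t) ⊆ vacant s := by
  intro x hx
  rw [mem_vacant] at hx ⊢
  exact fun p hp => hx p (Or.inl hp)

lemma mapIso_cunion (γ : X ≃ᵢ X) (s t : Config X) :
    Config.mapIso γ (cunion s t) = cunion (Config.mapIso γ s) (Config.mapIso γ t) := by
  apply Subtype.ext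
  exact image_union _ _ _

lemma cunion_flip (D : Set X) (p : Config X × Config X) :
    cunion (flip D p).1 (flip D p).2 = cunion p.1 p.2 := by
  apply Subtype.ext
  ext x
  simp only [flip, cunion, cinter, mem_union, mem_inter_iff, mem_compl_iff]
  tauto

lemma vacant_sub_flip (D : Set X) (p : Config X × Config X) :
    vacant p.1 ⊆ vacant (flip D p).1 := by
  intro x hx
  rw [mem_vacant] at hx ⊢
  exact fun q hq => hx q hq.1

lemma ball_sub_flip (o : X) (N : ℝ) (p : Config X × Config X) :
    ball o N ⊆ vacant (flip (closedBall o (N+1)) p).1 := by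
  intro x hx
  rw [mem_vacant]
  rintro q ⟨-, hq⟩
  rw [mem_compl_iff, mem_closedBall, not_le] at hq
  rw [mem_ball] at hx
  have := dist_triangle q x o
  rw [dist_comm x q]
  linarith

lemma flip_far (o : X) (N : ℝ) (p : Config X × Config X) {x : X}
    (hx : x ∈ vacant (flip (closedBall o (N+1)) p).1) (hd : N + 2 < dist x o) :
    x ∈ vacant p.1 := by
  rw [mem_vacant] at hx ⊢
  intro q hq
  by_cases h : q ∈ closedBall o (N+1)
  · rw [mem_closedBall] at h
    have := dist_triangle x q o
    linarith
  · exact hx q ⟨hq, h⟩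

lemma RO.comp {α β : Type*} [MeasurableSpace α] [MeasurableSpace β] {V : β → Set X} (h : RO V)
    {f : α → β} (hf : Measurable f) : RO (fun a => V (f a)) :=
  ⟨fun a => h.1 (f a), fun a r => hf (h.2 a r)⟩

variable [MeasurableSpace X] [BorelSpace X] [ProperSpace X]

lemma RO_vacant : RO (fun s : Config X => vacant s) := by
  refine ⟨isOpen_vacant, fun a r => ?_⟩
  have hK : IsCompact (closedBall a r) := isCompact_closedBall a r
  have : {s : Config X | closedBall a r ⊆ vacant s} = vd (cthickening 1 (closedBall a r)) := by
    ext s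
    rw [hK.cthickening_eq_biUnion_closedBall zero_le_one]
    simp only [vd, mem_setOf_eq, mem_iUnion, not_exists, subset_def, mem_vacant]
    constructor
    · intro h p hp y hy hpy
      have := h y hy p hp
      rw [mem_closedBall, dist_comm] at hpy
      linarith
    · intro h y hy p hp
      by_contra hcon
      exact h p hp y hy (by rw [mem_closedBall, dist_comm]; linarith)
  rw [this]
  exact measurableSet_vd isClosed_cthickening.measurableSet

lemma meas_FQ [LocallyConnectedSpace X] [Nonempty X] {α : Type*} [MeasurableSpace α]
    {V W : α → Set X} (hV : RO V) (hW : RO W) {Q : Set X} (hQ : Q.Countable) (s m : ℕ)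
    {x y : α → X} (hx : Measurable x) (hy : Measurable y) :
    MeasurableSet {a | FQ Q s m (V a) (W a) (x a) (y a)} := by
  have hS : SecondCountableTopology X := inferInstance
  refine meas_exists_mem hQ fun p _ => (hV.mem p).inter (MeasurableSet.inter ?_
    (meas_exists fun n => MeasurableSet.inter ?_ ?_))
  · exact measurableSet_lt (measurable_const.dist hx) measurable_const
  · exact meas_exists_mem hQ fun u _ => (hW.uu u).inter (hV.rr n p u)
  · refine meas_forall_mem hQ fun u _ => meas_imp (hW.uu u) (meas_imp (hV.rr _ p u) ?_)
    exact measurableSet_le (measurable_const.dist hy) measurable_const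

end VacantFacts

section Mass

variable {X : Type*} [MetricSpace X] [MeasurableSpace X] [BorelSpace X] [ProperSpace X]

lemma mass_top [MeasurableSpace (X ≃ᵢ X)] {m : Measure (X ≃ᵢ X)} {o : X}
    (hev : ∀ x : X, Measurable (fun g : X ≃ᵢ X => g x)) {c : ℝ≥0∞} (hc : 0 < c)
    (hm : ∀ h : X ≃ᵢ X, m {g | dist (g o) (h o) < 1/2} = c) {Q C : Set X}
    (hQ : Dense Q) (hQo : ∀ q ∈ Q, ∃ g : X ≃ᵢ X, g o = q) (hC : IsOpen C) (hCb : ¬ IsBounded C)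
    {T : Set (X ≃ᵢ X)} (hT : ∀ p ∈ Q, p ∈ C → ∀ g : X ≃ᵢ X, dist p (g o) < 1 → g ∈ T) :
    m T = ⊤ := by
  classical
  have key : ∀ s : Finset (X ≃ᵢ X), (∀ x ∈ s, x o ∈ Q ∧ x o ∈ C) → ∃ y : X ≃ᵢ X,
      (y o ∈ Q ∧ y o ∈ C) ∧ ∀ x ∈ s, 1 ≤ dist (x o) (y o) := by
    intro s _
    have hK : IsBounded (⋃ x ∈ s, closedBall (x o) 1) := by
      rw [isBounded_biUnion_finset]
      exact fun x _ => isBounded_closedBall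
    have hKc : IsClosed (⋃ x ∈ s, closedBall (x o) 1) :=
      isClosed_biUnion_finset fun x _ => isClosed_closedBall
    have hne : (C ∩ (⋃ x ∈ s, closedBall (x o) 1)ᶜ).Nonempty := by
      by_contra hcon
      apply hCb
      refine hK.subset fun z hz => ?_
      by_contra hz'
      exact hcon ⟨z, hz, hz'⟩
    obtain ⟨q, ⟨hq1, hq2⟩, hqQ⟩ := hQ.inter_open_nonempty _ (hC.inter hKc.isOpen_compl) hne
    obtain ⟨y, rfl⟩ := hQo q hqQ
    refine ⟨y, ⟨hqQ, hq1⟩, fun x hx => ?_⟩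
    by_contra hcon
    apply hq2
    refine mem_iUnion₂.2 ⟨x, hx, ?_⟩
    rw [mem_closedBall, dist_comm]
    linarith
  obtain ⟨f, hf1, hf2⟩ := exists_seq_of_forall_finset_exists (fun y : X ≃ᵢ X => y o ∈ Q ∧ y o ∈ C)
    (fun x y => 1 ≤ dist (x o) (y o)) key
  have hdisj : Pairwise (Disjoint on fun n => {g : X ≃ᵢ X | dist (g o) (f n o) < 1/2}) := by
    intro i j hij
    have hd : 1 ≤ dist (f i o) (f j o) := by
      rcases lt_or_gt_of_ne hij with h | h
      · exact hf2 i j h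
      · rw [dist_comm]; exact hf2 j i h
    refine Set.disjoint_left.2 fun g hg1 hg2 => ?_
    simp only [mem_setOf_eq] at hg1 hg2
    have := dist_triangle_left (f i o) (f j o) (g o)
    linarith
  have hsub : (⋃ n, {g : X ≃ᵢ X | dist (g o) (f n o) < 1/2}) ⊆ T := by
    refine iUnion_subset fun n g hg => hT (f n o) (hf1 n).1 (hf1 n).2 g ?_
    simp only [mem_setOf_eq] at hg
    rw [dist_comm]; linarith
  have hU : m (⋃ n, {g : X ≃ᵢ X | dist (g o) (f n o) < 1/2}) = ⊤ := by
    rw [measure_iUnion hdisj fun n => measurableSet_lt ((hev o).dist measurable_const)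
      measurable_const]
    simp only [hm]
    exact ENNReal.tsum_const_eq_top_of_ne_zero hc.ne'
  exact top_le_iff.1 (hU ▸ measure_mono hsub)

end Mass

section OutMass

variable {X : Type*} [MetricSpace X]

lemma out_mass [MeasurableSpace (X ≃ᵢ X)] {m : Measure (X ≃ᵢ X)} {o : X}
    (hinv : ∀ (h : X ≃ᵢ X) (r : ℝ), m {g | dist (g⁻¹ o) (h o) ≤ r} = m {g | dist (g o) o ≤ r})
    {Q V W : Set X} {k : ℕ} (hfin : (lcl V o).Finite) :
    m {g | FQ Q 1 k V W o (g⁻¹ o)} ≤ m {g | dist (g o) o ≤ 2 * k} *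
      ((numComps (V ∩ closedBall o 1) : ℕ∞) : ℝ≥0∞) := by
  classical
  let T : Set X → Set (X ≃ᵢ X) := fun C => {g | ∃ p ∈ Q, p ∈ V ∧ dist p o < 1 ∧
    C = connectedComponentIn (V ∩ ball o 2) p ∧ ∃ n, (∃ u ∈ Q, u ∈ UU W ∧ RR V n p u) ∧
    ∀ u ∈ Q, u ∈ UU W → RR V (n + 1) p u → dist u (g⁻¹ o) ≤ k}
  have hT : ∀ C, m (T C) ≤ m {g | dist (g o) o ≤ 2 * k} := by
    intro C
    rcases (T C).eq_empty_or_nonempty with h | ⟨g₀, hg₀⟩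
    · rw [h, measure_empty]; exact zero_le
    · rw [← hinv g₀⁻¹]
      refine measure_mono fun g hg => ?_
      obtain ⟨p, hp, hpV, hd, hC, n, h1, h2⟩ := hg
      obtain ⟨p', hp', hpV', hd', hC', n', h1', h2'⟩ := hg₀
      refine FQ_class (p := p) (p' := p') ⟨o, ?_⟩ h1 h2 h1' h2'
      rw [← hC, hC']
      exact mem_connectedComponentIn ⟨hpV', by rw [mem_ball]; linarith⟩
  have hsub : {g : X ≃ᵢ X | FQ Q 1 k V W o (g⁻¹ o)} ⊆ ⋃ C ∈ hfin.toFinset, T C := by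
    rintro g ⟨p, hp, hpV, hd, hn⟩
    refine mem_iUnion₂.2 ⟨connectedComponentIn (V ∩ ball o 2) p, ?_, p, hp, hpV, hd, rfl, hn⟩
    rw [hfin.mem_toFinset]
    exact ⟨p, hpV, hd, rfl⟩
  calc m {g | FQ Q 1 k V W o (g⁻¹ o)} ≤ m (⋃ C ∈ hfin.toFinset, T C) := measure_mono hsub
    _ ≤ ∑ C ∈ hfin.toFinset, m (T C) := measure_biUnion_finset_le _ _
    _ ≤ ∑ C ∈ hfin.toFinset, m {g | dist (g o) o ≤ 2 * k} := Finset.sum_le_sum fun C _ => hT C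
    _ = m {g | dist (g o) o ≤ 2 * k} * (((lcl V o).encard : ℕ∞) : ℝ≥0∞) := by
      rw [Finset.sum_const, hfin.encard_eq_coe_toFinset_card, nsmul_eq_mul, mul_comm]
      simp
    _ ≤ _ := by
      gcongr
      exact lcl_le V o

lemma lcl_image_finite (γ : X ≃ᵢ X) {V : Set X} {q : X} (h : (lcl V q).Finite) :
    (lcl (γ '' V) (γ q)).Finite := by
  refine (h.image (fun C => γ '' C)).subset ?_
  rintro _ ⟨_, ⟨p, hp, rfl⟩, hd, rfl⟩
  rw [γ.isometry.dist_eq] at hd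
  refine ⟨_, ⟨p, hp, hd, rfl⟩, ?_⟩
  have := γ.toHomeomorph.image_connectedComponentIn (s := V ∩ ball q 2) (x := p)
    ⟨hp, by rw [mem_ball]; linarith⟩
  change γ '' connectedComponentIn (V ∩ ball q 2) p =
    connectedComponentIn (γ '' (V ∩ ball q 2)) (γ p) at this
  change γ '' connectedComponentIn (V ∩ ball q 2) p = _
  rw [this, image_inter γ.injective, γ.image_ball]

variable [MeasurableSpace X] [BorelSpace X] [ProperSpace X]

/-- The good event. -/
def Good [MeasurableSpace (X ≃ᵢ X)] (m : Measure (X ≃ᵢ X)) (o : X) (Q : Set X)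
    (w : Config X × Config X) : Prop :=
  (∀ q ∈ Q, (lcl (vacant w.1) q).Finite) ∧
    ∀ k : ℕ, m {g | FQ Q 3 k (vacant w.1) (vacant (cunion w.1 w.2)) (g o) o} < ⊤

lemma not_bad [LocallyConnectedSpace X] [PreconnectedSpace X] [MeasurableSpace (X ≃ᵢ X)]
    {m : Measure (X ≃ᵢ X)} {o : X}
    (hev : ∀ x : X, Measurable (fun g : X ≃ᵢ X => g x)) {c : ℝ≥0∞} (hc : 0 < c)
    (hm : ∀ h : X ≃ᵢ X, m {g | dist (g o) (h o) < 1/2} = c) {Q : Set X}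
    (hQ : Dense Q) (hQo : ∀ q ∈ Q, ∃ g : X ≃ᵢ X, g o = q) {w : Config X × Config X}
    (hgood : ∀ N : ℕ, Good m o Q (flip (closedBall o ((N:ℝ)+1)) w))
    (hone : numUcomps (vacant (cunion w.1 w.2)) = 1) : numUcomps (vacant w.1) = 1 := by
  rw [numUcomps_one_iff (isOpen_vacant _) dense_univ] at hone ⊢
  obtain ⟨u0, -, hu0, huniq⟩ := hone
  have hsub := vacant_cunion_sub w.1 w.2
  refine ⟨u0, trivial, UU_mono hsub hu0, fun p0 _ hp0 => ?_⟩
  by_contra hcon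
  obtain ⟨N, hN⟩ : ∃ N : ℕ, u0 ∈ connectedComponentIn (ball o (N:ℝ)) p0 := by
    refine cc_iUnion (U := fun N : ℕ => ball o (N:ℝ)) (fun _ => isOpen_ball)
      (fun i j hij => ball_subset_ball (by exact_mod_cast hij)) ?_
    rw [iUnion_ball_nat, connectedComponentIn_univ, PreconnectedSpace.connectedComponent_eq_univ]
    trivial
  obtain ⟨hg1, hg2⟩ := hgood N
  rw [cunion_flip] at hg2
  obtain ⟨k, hk⟩ := in_mass hQ (isOpen_vacant (flip (closedBall o ((N:ℝ)+1)) w).1)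
    (isOpen_vacant (cunion w.1 w.2)) hsub (vacant_sub_flip _ w) o (N+2)
    (fun x hx hd => flip_far o N w hx hd) hg1 (p0 := p0) (u0 := u0) (fun u hu hup => hcon
      (cc_trans (connectedComponentIn_mono _ hsub (huniq u trivial hu)) (cc_symm hup))) hu0
    (connectedComponentIn_mono _ (ball_sub_flip o N w) hN)
  refine (hg2 k).ne (mass_top hev hc hm hQ hQo
    ((isOpen_vacant w.1).connectedComponentIn (x := p0)) hp0 ?_)
  intro p hpQ hpC g hd
  exact hk p hpQ hpC (g o) hd

end OutMass

section MTP

variable {X : Type*} [MetricSpace X] [MeasurableSpace X] [BorelSpace X] [ProperSpace X]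
  [LocallyConnectedSpace X] [Nonempty X]

lemma ae_lcl_finite {P : Measure (Config X)} {o : X}
    (hinv : ∀ γ : X ≃ᵢ X, Measure.map (Config.mapIso γ) P = P)
    (hnum : ∫⁻ ω, (numComps (vacant ω ∩ closedBall o 1) : ℝ≥0∞) ∂P < ⊤)
    {q : X} (hq : ∃ g : X ≃ᵢ X, g o = q) : ∀ᵐ ω ∂P, (lcl (vacant ω) q).Finite := by
  have h0 : ∀ᵐ ω ∂P, (lcl (vacant ω) o).Finite := by
    rw [ae_iff]
    set B : Set (Config X) := {ω | ¬ (lcl (vacant ω) o).Finite} with hB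
    have hBm : MeasurableSet B := (RO_vacant.lclfin o).compl
    have h1 : ∫⁻ ω in B, (⊤ : ℝ≥0∞) ∂P ≤
        ∫⁻ ω, (numComps (vacant ω ∩ closedBall o 1) : ℝ≥0∞) ∂P := by
      refine le_trans ?_ (setLIntegral_le_lintegral B _)
      refine setLIntegral_mono' hBm fun ω hω => ?_
      have h2 : (lcl (vacant ω) o).encard = ⊤ := Set.encard_eq_top hω
      have h3 := lcl_le (vacant ω) o
      rw [h2, top_le_iff] at h3
      rw [h3]
      simp
    rw [setLIntegral_const] at h1
    by_contra hne
    rw [ENNReal.top_mul hne] at h1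
    exact absurd hnum (not_lt.2 h1)
  obtain ⟨g, rfl⟩ := hq
  rw [← hinv g, ae_map_iff (measurable_mapIso g).aemeasurable (RO_vacant.lclfin (g o))]
  filter_upwards [h0] with ω hω
  rw [vacant_mapIso]
  exact lcl_image_finite g hω

lemma RO_fst : RO (fun w : Config X × Config X => vacant w.1) := RO_vacant.comp measurable_fst

lemma RO_un : RO (fun w : Config X × Config X => vacant (cunion w.1 w.2)) :=
  RO_vacant.comp measurable_cunion

set_option maxHeartbeats 2000000 in
lemma mtp [MeasurableSpace (X ≃ᵢ X)] {m : Measure (X ≃ᵢ X)} [SFinite m] {o : X}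
    (hev : ∀ x : X, Measurable (fun g : X ≃ᵢ X => g x))
    (hev' : ∀ x : X, Measurable (fun g : X ≃ᵢ X => g⁻¹ x))
    (hKfin : ∀ r : ℝ, m {g | dist (g o) o ≤ r} < ⊤)
    (hminv : ∀ (h : X ≃ᵢ X) (r : ℝ), m {g | dist (g⁻¹ o) (h o) ≤ r} = m {g | dist (g o) o ≤ r})
    {P₁ P₃ : Measure (Config X)} [IsProbabilityMeasure P₁] [IsProbabilityMeasure P₃]
    (h₁ : ∀ γ : X ≃ᵢ X, Measure.map (Config.mapIso γ) P₁ = P₁)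
    (h₃ : ∀ γ : X ≃ᵢ X, Measure.map (Config.mapIso γ) P₃ = P₃)
    (hnum : ∫⁻ ω, (numComps (vacant ω ∩ closedBall o 1) : ℝ≥0∞) ∂P₁ < ⊤)
    {Q : Set X} (hQ : Dense Q) (hQc : Q.Countable) (k : ℕ) :
    ∀ᵐ w ∂(P₁.prod P₃),
      m {g | FQ Q 3 k (vacant w.1) (vacant (cunion w.1 w.2)) (g o) o} < ⊤ := by
  set P := P₁.prod P₃ with hP
  have hPinv : ∀ γ : X ≃ᵢ X, Measure.map (Prod.map (Config.mapIso γ) (Config.mapIso γ)) P = P := by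
    intro γ
    rw [hP, ← Measure.map_prod_map _ _ (measurable_mapIso γ) (measurable_mapIso γ), h₁, h₃]
  let S : Set ((Config X × Config X) × (X ≃ᵢ X)) := {a | FQ Q 3 k (vacant a.1.1)
    (vacant (cunion a.1.1 a.1.2)) (a.2 o) o}
  let T : Set ((Config X × Config X) × (X ≃ᵢ X)) := {a | FQ Q 1 k (vacant a.1.1)
    (vacant (cunion a.1.1 a.1.2)) o (a.2⁻¹ o)}
  have hS : MeasurableSet S := meas_FQ (RO_fst.comp measurable_fst) (RO_un.comp measurable_fst)
    hQc 3 k ((hev o).comp measurable_snd) measurable_const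
  have hT : MeasurableSet T := meas_FQ (RO_fst.comp measurable_fst) (RO_un.comp measurable_fst)
    hQc 1 k measurable_const ((hev' o).comp measurable_snd)
  have hST : (P.prod m) S ≤ (P.prod m) T := by
    rw [Measure.prod_apply_symm hS, Measure.prod_apply_symm hT]
    refine lintegral_mono fun g => ?_
    have hTg : MeasurableSet ((fun w => (w, g)) ⁻¹' T) := measurable_prodMk_right hT
    calc P ((fun w => (w, g)) ⁻¹' S)
        ≤ P (Prod.map (Config.mapIso g⁻¹) (Config.mapIso g⁻¹) ⁻¹' ((fun w => (w, g)) ⁻¹' T)) := by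
          refine measure_mono fun w hw => ?_
          have hw : FQ Q 3 k (vacant w.1) (vacant (cunion w.1 w.2)) (g o) o := hw
          have h2 := FX_image g⁻¹ (FQ_to_univ hQ (isOpen_vacant _) (isOpen_vacant _) hw)
          have h3 : g⁻¹ (g o) = o := g.symm_apply_apply o
          rw [← vacant_mapIso, ← vacant_mapIso, mapIso_cunion, h3] at h2
          exact FQ_of_univ hQ (isOpen_vacant _) (isOpen_vacant _) h2
      _ = Measure.map (Prod.map (Config.mapIso g⁻¹) (Config.mapIso g⁻¹)) P
            ((fun w => (w, g)) ⁻¹' T) :=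
          (Measure.map_apply ((measurable_mapIso _).prodMap (measurable_mapIso _)) hTg).symm
      _ = P ((fun w => (w, g)) ⁻¹' T) := by rw [hPinv]
  have hrefl : ∃ g : X ≃ᵢ X, g o = o := ⟨IsometryEquiv.refl X, rfl⟩
  have hTfin : (P.prod m) T < ⊤ := by
    have hfin : ∀ᵐ ω ∂P₁, (lcl (vacant ω) o).Finite := ae_lcl_finite h₁ hnum hrefl
    have hfm : Measurable (fun w => m (Prod.mk w ⁻¹' T)) := measurable_measure_prodMk_left hT
    calc (P.prod m) T = ∫⁻ w, m (Prod.mk w ⁻¹' T) ∂P := Measure.prod_apply hT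
      _ = ∫⁻ ω, ∫⁻ η, m (Prod.mk (ω, η) ⁻¹' T) ∂P₃ ∂P₁ := lintegral_prod _ hfm.aemeasurable
      _ ≤ ∫⁻ ω, m {g | dist (g o) o ≤ 2 * k} *
            ((numComps (vacant ω ∩ closedBall o 1) : ℕ∞) : ℝ≥0∞) ∂P₁ := by
          refine lintegral_mono_ae ?_
          filter_upwards [hfin] with ω hω
          calc ∫⁻ η, m (Prod.mk (ω, η) ⁻¹' T) ∂P₃
              ≤ ∫⁻ _, m {g | dist (g o) o ≤ 2 * k} *
                ((numComps (vacant ω ∩ closedBall o 1) : ℕ∞) : ℝ≥0∞) ∂P₃ :=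
                lintegral_mono fun η =>
                  out_mass (Q := Q) (k := k) (W := vacant (cunion ω η)) hminv hω
            _ = _ := by rw [lintegral_const, measure_univ, mul_one]
      _ = m {g | dist (g o) o ≤ 2 * k} *
            ∫⁻ ω, ((numComps (vacant ω ∩ closedBall o 1) : ℕ∞) : ℝ≥0∞) ∂P₁ :=
          lintegral_const_mul' _ _ (hKfin _).ne
      _ < ⊤ := ENNReal.mul_lt_top (hKfin _) hnum
  have hSm : Measurable (fun w => m (Prod.mk w ⁻¹' S)) := measurable_measure_prodMk_left hS
  have hSf : ∫⁻ w, m (Prod.mk w ⁻¹' S) ∂P ≠ ⊤ := by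
    rw [← Measure.prod_apply hS]; exact (hST.trans_lt hTfin).ne
  exact ae_lt_top hSm hSf

end MTP

/-- **Uniqueness monotonicity for the vacant set** (Theorem 3(b)). -/
theorem uniqueness_monotonicity_vacant
    {X : Type*} [MetricSpace X] [ProperSpace X] [CompleteSpace X] [SimplyConnectedSpace X]
    [NoncompactSpace X] [MeasurableSpace X] [BorelSpace X] [Nonempty X]
    (hsym : PointSymmetric X)
    (μ : Measure X)
    (hμiso : ∀ γ : X ≃ᵢ X, Measure.map γ μ = μ)
    (hμball : ∀ (x : X) (r : ℝ), 0 < r → 0 < μ (closedBall x r) ∧ μ (closedBall x r) < ⊤)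
    (o : X)
    (lam₁ lam₂ : ℝ≥0) (hlam₁ : 0 < lam₁) (hlam : lam₁ < lam₂)
    (P₁ P₂ : Measure (Config X))
    (hP₁ : IsPoisson ((lam₁ : ℝ≥0∞) • μ) P₁)
    (hP₂ : IsPoisson ((lam₂ : ℝ≥0∞) • μ) P₂)
    (hNumComps : ∫⁻ ω, (numComps (vacant ω ∩ closedBall o 1) : ℝ≥0∞) ∂P₁ < ⊤)
    (h : P₂ {ω : Config X | numUcomps (vacant ω) = 1} = 1) :
    P₁ {ω : Config X | numUcomps (vacant ω) = 1} = 1 := by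
  haveI : PreconnectedSpace X := inferInstance
  haveI : LocallyConnectedSpace X := locConn hsym
  have hLF : LF μ := fun B hB => by
    obtain ⟨r, hr⟩ := (isBounded_iff_subset_closedBall o).1 hB
    have h1 : B ⊆ closedBall o (max r 1) := hr.trans (closedBall_subset_closedBall (le_max_left _ _))
    exact ((measure_mono h1).trans_lt (hμball o (max r 1)
      (lt_of_lt_of_le one_pos (le_max_right _ _))).2).ne
  -- the auxiliary Poisson process
  obtain ⟨P₃, hV₃⟩ := exists_isVoid hLF (lam₂ - lam₁) o
  have hV₁ := hP₁.isVoid (hLF.smul lam₁)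
  have hV₂ := hP₂.isVoid (hLF.smul lam₂)
  haveI := hV₁.1
  haveI := hV₂.1
  haveI := hV₃.1
  have hiso : ∀ (c : ℝ≥0) (γ : X ≃ᵢ X),
      Measure.map γ ((c : ℝ≥0∞) • μ) = (c : ℝ≥0∞) • μ := fun c γ => by
    rw [Measure.map_smul, hμiso]
  have hI₁ := hV₁.iso (hiso lam₁)
  have hI₃ := hV₃.iso (hiso (lam₂ - lam₁))
  have hmap : Measure.map (fun p : Config X × Config X => cunion p.1 p.2) (P₁.prod P₃) = P₂ := by
    have hU := hV₁.union hV₃ (hLF.smul _) (hLF.smul _)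
    rw [← add_smul, ← ENNReal.coe_add, add_tsub_cancel_of_le hlam.le] at hU
    exact hU.unique hV₂
  -- the Haar measure and the dense set
  obtain ⟨iG, m, hSF, -, hev, hev', hKfin, ⟨c, hc, hm⟩, hminv⟩ := exists_haar hsym o
  have hdense : Dense (range fun g : X ≃ᵢ X => g o) := by
    rw [Metric.dense_iff]
    intro y ε hε
    obtain ⟨s, -, hs⟩ := symGroup_dense hsym o y ε hε
    exact ⟨s o, hs, s, rfl⟩
  obtain ⟨Q, hQsub, hQc, hQd⟩ := hdense.exists_countable_dense_subset
  have hQo : ∀ q ∈ Q, ∃ g : X ≃ᵢ X, g o = q := fun q hq => hQsub hq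
  have hgood : ∀ᵐ w ∂(P₁.prod P₃), Good m o Q w := by
    have h1 : ∀ᵐ w ∂(P₁.prod P₃), ∀ q ∈ Q, (lcl (vacant w.1) q).Finite := by
      rw [ae_ball_iff hQc]
      intro q hq
      exact Measure.quasiMeasurePreserving_fst.ae (ae_lcl_finite hI₁ hNumComps (hQo q hq))
    have h2 : ∀ᵐ w ∂(P₁.prod P₃), ∀ k : ℕ,
        m {g | FQ Q 3 k (vacant w.1) (vacant (cunion w.1 w.2)) (g o) o} < ⊤ :=
      ae_all_iff.2 fun k => mtp hev hev' hKfin hminv hI₁ hI₃ hNumComps hQd hQc k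
    filter_upwards [h1, h2] with w h1 h2
    exact ⟨h1, h2⟩
  have hflip : ∀ᵐ w ∂(P₁.prod P₃), ∀ N : ℕ, Good m o Q (flip (closedBall o ((N:ℝ)+1)) w) := by
    rw [ae_all_iff]
    intro N
    have hac := flip_ac hLF (tsub_pos_of_lt hlam) hV₁ hV₃
      (measurableSet_closedBall (x := o) (ε := (N:ℝ)+1)) isBounded_closedBall
    exact ae_of_ae_map (measurable_flip measurableSet_closedBall).aemeasurable
      (hac.ae_le hgood)
  have hone : ∀ᵐ w ∂(P₁.prod P₃), numUcomps (vacant (cunion w.1 w.2)) = 1 := by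
    have h1 : ∀ᵐ ω ∂P₂, numUcomps (vacant ω) = 1 :=
      (prob_compl_eq_zero_iff (RO_vacant.one)).2 h
    rw [← hmap] at h1
    exact ae_of_ae_map measurable_cunion.aemeasurable h1
  have hfin : ∀ᵐ w ∂(P₁.prod P₃), numUcomps (vacant w.1) = 1 := by
    filter_upwards [hflip, hone] with w h1 h2
    exact not_bad hev hc hm hQd hQo h1 h2
  have hfst : Measure.map Prod.fst (P₁.prod P₃) = P₁ := by
    rw [Measure.map_fst_prod, measure_univ, one_smul]
  have hlast : ∀ᵐ ω ∂P₁, numUcomps (vacant ω) = 1 := by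
    rw [← hfst, ae_map_iff measurable_fst.aemeasurable RO_vacant.one]
    exact hfin
  exact (prob_compl_eq_zero_iff (RO_vacant.one)).1 hlast

end BooleanModel
end
end

section
/- Let P be an insertion-tolerant probability measure on M(X) and let B ⊆ X be Borel with 0 < μ_X(B) < ∞. Then for every random measurable set S = S(ω) ⊆ B that is measurable with respect to σ(ω|_{B^c}) and satisfies μ_X(S) > 0 almost surely, one has P[ω(S) = ω(B) = 1 | ω|_{B^c}] > 0 P-almost surely on the event {ω(B) = 0}. -/
open MeasureTheory Metric Set Bornology Function
open scoped ENNReal NNReal unitInterval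

noncomputable section

namespace BooleanModel

section Helpers

variable {X : Type*} [MetricSpace X] [MeasurableSpace X]

theorem measurableSet_count_eq {C : Set X} (hC : MeasurableSet C) (n : ℕ∞) :
    MeasurableSet {s : Config X | Config.count C s = n} :=
  MeasurableSpace.measurableSet_generateFrom ⟨C, n, hC, rfl⟩

theorem measurable_restrict {B : Set X} (hB : MeasurableSet B) :
    Measurable (Config.restrict B : Config X → Config X) := by
  apply measurable_generateFrom
  rintro _ ⟨C, n, hC, rfl⟩
  have := measurableSet_count_eq (hB.compl.inter hC) n
  convert this using 1
  ext s
  simp [Config.restrict, Config.count, Set.inter_assoc]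

theorem config_isClosed (s : Config X) : IsClosed s.1 := by
  rw [← closure_subset_iff_isClosed]
  intro y hy
  have hfin := s.2 (ball y 1) isBounded_ball
  have h : y ∈ closure (s.1 ∩ ball y 1) := by
    rw [inter_comm]
    exact isOpen_ball.inter_closure ⟨mem_ball_self one_pos, hy⟩
  rw [hfin.isClosed.closure_eq] at h
  exact h.1

theorem measurableSet_mem [SecondCountableTopology X] [BorelSpace X] :
    MeasurableSet {p : Config X × X | p.2 ∈ p.1.1} := by
  have key : {p : Config X × X | p.2 ∈ p.1.1} =
      ⋂ b ∈ TopologicalSpace.countableBasis X,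
        ({p : Config X × X | Config.count b p.1 = 0}ᶜ ∪ {p : Config X × X | p.2 ∈ bᶜ}) := by
    ext ⟨s, y⟩
    simp only [mem_setOf_eq, mem_iInter, mem_union, mem_compl_iff]
    constructor
    · intro hy b hb
      by_cases hyb : y ∈ b
      · left
        intro h0
        have h1 : s.1 ∩ b = ∅ := Set.encard_eq_zero.1 h0
        exact (h1 ▸ (⟨hy, hyb⟩ : y ∈ s.1 ∩ b) : y ∈ (∅ : Set X))
      · exact Or.inr hyb
    · intro h
      rw [← (config_isClosed s).closure_eq,
        (TopologicalSpace.isBasis_countableBasis X).mem_closure_iff]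
      intro b hb hyb
      rcases h b hb with h | h
      · rw [inter_comm]
        exact Set.nonempty_iff_ne_empty.2 fun h0 => h (Set.encard_eq_zero.2 h0)
      · exact absurd hyb h
  rw [key]
  refine MeasurableSet.biInter (TopologicalSpace.countable_countableBasis X) fun b hb => ?_
  have hbm : MeasurableSet b := (TopologicalSpace.isOpen_of_mem_countableBasis hb).measurableSet
  exact ((measurableSet_count_eq hbm 0).preimage measurable_fst).compl.union
    (hbm.compl.preimage measurable_snd)

theorem measurable_insertPt [SecondCountableTopology X] [BorelSpace X] :
    Measurable (fun p : Config X × X => Config.insertPt p.2 p.1) := by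
  apply measurable_generateFrom
  rintro _ ⟨C, n, hC, rfl⟩
  have hM := measurableSet_mem (X := X)
  have hCm : MeasurableSet {p : Config X × X | p.2 ∈ C} := hC.preimage measurable_snd
  have hU : MeasurableSet (⋃ k ∈ {k : ℕ∞ | k + 1 = n},
      {p : Config X × X | Config.count C p.1 = k}) :=
    MeasurableSet.biUnion (Set.to_countable _) fun k _ =>
      (measurableSet_count_eq hC k).preimage measurable_fst
  have hN : MeasurableSet {p : Config X × X | Config.count C p.1 = n} :=
    (measurableSet_count_eq hC n).preimage measurable_fst
  convert ((hM.union hCm.compl).inter hN).union ((hM.compl.inter hCm).inter hU) using 1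
  ext ⟨s, y⟩
  change (insert y s.1 ∩ C).encard = n ↔ _
  simp only [mem_setOf_eq, mem_union, mem_inter_iff, mem_compl_iff, mem_iUnion,
    Config.count, exists_prop]
  by_cases hyC : y ∈ C
  · by_cases hys : y ∈ s.1
    · simp [hyC, hys, Set.insert_eq_of_mem hys]
    · rw [Set.insert_inter_of_mem hyC, Set.encard_insert_of_notMem (fun h => hys h.1)]
      simp [hyC, hys]
  · rw [Set.insert_inter_of_notMem hyC]
    simp [hyC]

end Helpers

/-- **Lemma (conditional insertion), Lemma 7(a).**
If `P` is insertion-tolerant, `B` is Borel with `0 < μ B < ∞` and `S = S(ω) ⊆ B` is a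
`σ(ω|_{B^c})`-measurable random subset of `B` with `μ(S) > 0` a.s., then
`P[ω(S) = ω(B) = 1 | ω|_{B^c}] > 0` a.s. on the event `{ω(B) = 0}`. -/
theorem conditional_insertion_positive
    {X : Type*} [MetricSpace X] [ProperSpace X] [CompleteSpace X] [SimplyConnectedSpace X]
    [NoncompactSpace X] [MeasurableSpace X] [BorelSpace X] [Nonempty X]
    (hsym : PointSymmetric X)
    (μ : Measure X)
    (hμiso : ∀ γ : X ≃ᵢ X, Measure.map γ μ = μ)
    (hμball : ∀ (x : X) (r : ℝ), 0 < r → 0 < μ (closedBall x r) ∧ μ (closedBall x r) < ⊤)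
    (P : Measure (Config X)) [IsProbabilityMeasure P]
    (hPins : InsertionTolerant μ P)
    (B : Set X) (hB : MeasurableSet B) (hB0 : 0 < μ B) (hB1 : μ B < ⊤)
    (S : Config X → Set X)
    (hSsub : ∀ ω, S ω ⊆ B)
    (hSBorel : ∀ ω, MeasurableSet (S ω))
    (hSfac : ∀ ω, S ω = S (Config.restrict B ω))
    (hSmeas : MeasurableSet
      {ω : Config X | Config.count (S ω) ω = 1 ∧ Config.count B ω = 1})
    (hSpos : ∀ᵐ ω ∂P, 0 < μ (S ω)) :
    ∀ᵐ ω ∂P, Config.count B ω = 0 →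
      0 < (P[Set.indicator
              {ω' : Config X | Config.count (S ω') ω' = 1 ∧ Config.count B ω' = 1}
              (fun _ => (1 : ℝ))
            | MeasurableSpace.comap (Config.restrict B) Config.instMeasurableSpace]) ω := by
  have hm := (measurable_restrict hB).comap_le
  set A : Set (Config X) :=
    {ω' : Config X | Config.count (S ω') ω' = 1 ∧ Config.count B ω' = 1} with hA
  set f := P[A.indicator (fun _ => (1 : ℝ))
    | MeasurableSpace.comap (Config.restrict B) Config.instMeasurableSpace] with hf
  have hfm : Measurable[MeasurableSpace.comap (Config.restrict B) Config.instMeasurableSpace] f :=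
    stronglyMeasurable_condExp.measurable
  have hNm : MeasurableSet[MeasurableSpace.comap (Config.restrict B) Config.instMeasurableSpace]
      {ω | f ω ≤ 0} := hfm measurableSet_Iic
  obtain ⟨N', hN', hNN⟩ := hNm
  have hN : MeasurableSet {ω | f ω ≤ 0} := hm _ ⟨N', hN', hNN⟩
  have hint : Integrable (A.indicator (fun _ => (1 : ℝ))) P :=
    (integrable_const 1).indicator hSmeas
  -- the event has zero mass on the set where the conditional probability is nonpositive
  have h0 : P (A ∩ {ω | f ω ≤ 0}) = 0 := by
    have h1 : ∫ ω in {ω | f ω ≤ 0}, f ω ∂P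
        = ∫ ω in {ω | f ω ≤ 0}, A.indicator (fun _ => (1 : ℝ)) ω ∂P :=
      setIntegral_condExp hm hint ⟨N', hN', hNN⟩
    have h2 : ∫ ω in {ω | f ω ≤ 0}, f ω ∂P ≤ 0 :=
      setIntegral_nonpos hN fun ω hω => hω
    rw [h1, integral_indicator hSmeas, Measure.restrict_restrict hSmeas] at h2
    simp only [integral_const, smul_eq_mul, mul_one] at h2
    have h3 : P.real (A ∩ {ω | f ω ≤ 0}) ≤ 0 := by simpa [Measure.real] using h2
    have h4 : P.real (A ∩ {ω | f ω ≤ 0}) = 0 := le_antisymm h3 measureReal_nonneg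
    exact (measureReal_eq_zero_iff).1 h4
  have h1 := hPins B hB hB0 hB1 h0
  rw [Measure.map_apply measurable_insertPt (hSmeas.inter hN)] at h1
  haveI : IsFiniteMeasure (μ.restrict B) := ⟨by simpa using hB1⟩
  have h2 := Measure.measure_ae_null_of_prod_null h1
  filter_upwards [h2, hSpos] with ω hω hpos hcount
  by_contra hneg
  rw [not_lt] at hneg
  have hemp : ω.1 ∩ B = ∅ := Set.encard_eq_zero.1 hcount
  have hsub : S ω ⊆ Prod.mk ω ⁻¹' ((fun p : Config X × X => Config.insertPt p.2 p.1) ⁻¹'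
      (A ∩ {ω | f ω ≤ 0})) := by
    intro y hy
    have hyB := hSsub ω hy
    have hr : Config.restrict B (Config.insertPt y ω) = Config.restrict B ω := by
      apply Subtype.ext
      change insert y ω.1 ∩ Bᶜ = ω.1 ∩ Bᶜ
      exact Set.insert_inter_of_notMem (fun h => h hyB)
    have hS : S (Config.insertPt y ω) = S ω := by
      rw [hSfac (Config.insertPt y ω), hr, ← hSfac]
    have hempS : ω.1 ∩ S ω = ∅ :=
      Set.subset_empty_iff.1 (hemp ▸ Set.inter_subset_inter_right _ (hSsub ω))
    change Config.insertPt y ω ∈ A ∩ {ω | f ω ≤ 0}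
    refine ⟨⟨?_, ?_⟩, ?_⟩
    · rw [hS]
      change (insert y ω.1 ∩ S ω).encard = 1
      rw [Set.insert_inter_of_mem hy, hempS]
      simp
    · change (insert y ω.1 ∩ B).encard = 1
      rw [Set.insert_inter_of_mem hyB, hemp]
      simp
    · have hω' : ω ∈ {ω | f ω ≤ 0} := hneg
      rw [← hNN] at hω' ⊢
      change Config.restrict B (Config.insertPt y ω) ∈ N'
      rw [hr]
      exact hω'
  have h3 : ((μ B)⁻¹ • μ.restrict B) (S ω) = 0 := measure_mono_null hsub hω
  rw [Measure.smul_apply, smul_eq_mul, Measure.restrict_apply (hSBorel ω),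
    Set.inter_eq_left.2 (hSsub ω), mul_eq_zero] at h3
  rcases h3 with h3 | h3
  · exact hB1.ne (ENNReal.inv_eq_zero.1 h3)
  · exact hpos.ne' h3

end BooleanModel
end
end

section
/- Let P be a deletion-tolerant probability measure on M(X) and let B ⊆ X be Borel with 0 < μ_X(B) < ∞. Then P[ω(B) = 0 | ω|_{B^c}] > 0 P-almost surely. -/
open MeasureTheory Metric Set Bornology Function
open scoped ENNReal NNReal unitInterval

noncomputable section

namespace BooleanModel

theorem measurable_restrict_aux {X : Type*} [MetricSpace X] [MeasurableSpace X]
    {B : Set X} (hB : MeasurableSet B) : Measurable (Config.restrict B) := by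
  refine measurable_generateFrom ?_
  rintro A ⟨C, n, hC, rfl⟩
  refine MeasurableSpace.measurableSet_generateFrom ⟨Bᶜ ∩ C, n, hB.compl.inter hC, ?_⟩
  ext s
  simp [Config.restrict, Set.inter_assoc]

/-- **Lemma (conditional deletion), Lemma 7(b).**
If `P` is deletion-tolerant and `B` is Borel with `0 < μ B < ∞`, then
`P[ω(B) = 0 | ω|_{B^c}] > 0` `P`-almost surely. -/
theorem conditional_deletion_positive
    {X : Type*} [MetricSpace X] [ProperSpace X] [CompleteSpace X] [SimplyConnectedSpace X]
    [NoncompactSpace X] [MeasurableSpace X] [BorelSpace X] [Nonempty X]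
    (hsym : PointSymmetric X)
    (μ : Measure X)
    (hμiso : ∀ γ : X ≃ᵢ X, Measure.map γ μ = μ)
    (hμball : ∀ (x : X) (r : ℝ), 0 < r → 0 < μ (closedBall x r) ∧ μ (closedBall x r) < ⊤)
    (P : Measure (Config X)) [IsProbabilityMeasure P]
    (hPdel : DeletionTolerant μ P)
    (B : Set X) (hB : MeasurableSet B) (hB0 : 0 < μ B) (hB1 : μ B < ⊤) :
    ∀ᵐ ω ∂P,
      0 < (P[Set.indicator {ω' : Config X | Config.count B ω' = 0} (fun _ => (1 : ℝ))
            | MeasurableSpace.comap (Config.restrict B) Config.instMeasurableSpace]) ω := by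
  have hr : Measurable (Config.restrict B) := measurable_restrict_aux hB
  have hm := hr.comap_le
  have hE : MeasurableSet {ω' : Config X | Config.count B ω' = 0} :=
    MeasurableSpace.measurableSet_generateFrom ⟨B, 0, hB, rfl⟩
  set E : Set (Config X) := {ω' : Config X | Config.count B ω' = 0} with hEdef
  set f := P[Set.indicator E (fun _ => (1 : ℝ))
            | MeasurableSpace.comap (Config.restrict B) Config.instMeasurableSpace] with hf
  have hint : Integrable (Set.indicator E (fun _ => (1 : ℝ))) P :=
    (integrable_const (1 : ℝ)).indicator hE
  have hN : MeasurableSet[MeasurableSpace.comap (Config.restrict B) Config.instMeasurableSpace]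
      {ω | f ω ≤ 0} := by
    have hsm : StronglyMeasurable[MeasurableSpace.comap (Config.restrict B)
        Config.instMeasurableSpace] f := stronglyMeasurable_condExp
    exact hsm.measurable measurableSet_Iic
  have h1 : ∫ ω in {ω | f ω ≤ 0}, f ω ∂P = P.real (E ∩ {ω | f ω ≤ 0}) := by
    rw [hf, setIntegral_condExp hm hint hN, integral_indicator hE]
    simp [Measure.real, Measure.restrict_apply hE, ← hf]
  have h2 : ∫ ω in {ω | f ω ≤ 0}, f ω ∂P ≤ 0 :=
    setIntegral_nonpos (hm _ hN) (fun ω hω => hω)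
  have h3 : P (E ∩ {ω | f ω ≤ 0}) = 0 := by
    have : P.real (E ∩ {ω | f ω ≤ 0}) = 0 := le_antisymm (h1 ▸ h2) measureReal_nonneg
    exact (measureReal_eq_zero_iff).1 this
  obtain ⟨A, hA, hAN⟩ := hN
  have hfix : ∀ ω ∈ E, Config.restrict B ω = ω := by
    intro ω hω
    have h0 : ω.1 ∩ B = ∅ := Set.encard_eq_zero.1 hω
    apply Subtype.ext
    change ω.1 ∩ Bᶜ = ω.1
    exact Set.inter_eq_left.2 (Set.disjoint_iff_inter_eq_empty.2 h0).subset_compl_right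
  have h4 : P (E ∩ A) = 0 := by
    have : E ∩ A = E ∩ {ω | f ω ≤ 0} := by
      rw [← hAN]
      ext ω
      constructor
      · rintro ⟨a, b⟩
        exact ⟨a, by simpa [hfix ω a] using b⟩
      · rintro ⟨a, b⟩
        exact ⟨a, by simpa [hfix ω a] using b⟩
    rw [this, h3]
  have h5 := hPdel B hB hB0 hB1 h4
  rw [Measure.map_apply hr (hE.inter hA)] at h5
  have h6 : Config.restrict B ⁻¹' (E ∩ A) = {ω | f ω ≤ 0} := by
    rw [← hAN, Set.preimage_inter]
    refine Set.inter_eq_right.2 fun ω _ => ?_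
    change ((ω.1 ∩ Bᶜ) ∩ B).encard = 0
    rw [Set.inter_assoc]
    simp
  rw [h6] at h5
  rw [ae_iff]
  simpa only [not_lt] using h5

end BooleanModel
end
end
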